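/- Let f be a Holland map in Hol(γ,ρ) with γ < 1, with invariant density h and points z_n. There exists a constant C > 0 such that for all integers 1 ≤ i < j, V(1_{[z_j,z_i]} h) ≤ C j and V(1_{[z_j,z_i]} / h) ≤ C j / i². -/

import Mathlib

open MeasureTheory Filter Set Topology

structure IsHolland (γ : ℝ) (ρ : ℝ → ℝ) (f : ℝ → ℝ) : Prop where
  gamma_pos : 0 < γ
  rho_pos : ∀ x ∈ Set.Ioo (0:ℝ) 1, 0 < ρ x
  maps_to : ∀ x ∈ Set.Icc (0:ℝ) 1, f x ∈ Set.Icc (0:ℝ) 1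
  eq_left : ∀ x ∈ Set.Icc (0:ℝ) (1/2), f x = x * (1 + x ^ γ * ρ x)
  eq_right : ∀ x ∈ Set.Ioc (1/2:ℝ) 1, f x = 2 * x - 1
  smooth : ContDiffOn ℝ 2 ρ (Set.Ioo 0 1)
  slowly_zero : ∀ l : ℝ, 0 < l →
    Tendsto (fun x => ρ (l * x) / ρ x) (nhdsWithin 0 (Set.Ioi 0)) (nhds 1)
  deriv_small : Tendsto (fun x => x * deriv ρ x / ρ x) (nhdsWithin 0 (Set.Ioi 0)) (nhds 0)
  deriv2_small : Tendsto (fun x => x ^ 2 * deriv (deriv ρ) x / ρ x)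
    (nhdsWithin 0 (Set.Ioi 0)) (nhds 0)
  rho_zero : Tendsto ρ (nhdsWithin 0 (Set.Ioi 0)) (nhds 0)
  half : f (1/2) = 1
  expanding : ∀ x ∈ Set.Ioo (0:ℝ) 1, x ≠ 1/2 → 1 < deriv f x

/-!
Write `f x = x + w x` near `0`. Regular variation of `w` makes `w x / x` change by an amount
comparable to its square at each step, so along a backward orbit of the neutral branch `x / w x`
grows linearly while the squares of `w x / x` are summable. Summability bounds the distortion of the
iterates of the neutral inverse branch. The transfer equation telescopes along that branch and
writes averages of `h` near `0` as a series of averages near `1/2`, weighted by slopes of these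
iterates; bounded distortion turns this into `h x ≍ x / w x ≍ n` on `[z_{n+1}, z_n]`, with
oscillation `O(1)` there. Hence on this interval `h` has variation `O(1)` and `1 / h` has variation
`O(1 / n²)`, and it remains to sum over `i ≤ n < j` and add the jumps at `z_j` and `z_i`.
-/

section Sequences

variable {u v d e ε : ℕ → ℝ} {c C : ℝ}

lemma exists_forall_nat_of_eventually {P : ℕ → ℝ → Prop} (hmono : ∀ n, Monotone (P n))
    (heach : ∀ n, ∃ C, P n C) (htail : ∃ C, ∀ᶠ n in atTop, P n C) : ∃ C, ∀ n, P n C := by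
  choose B hB using heach
  obtain ⟨C, hC⟩ := htail
  obtain ⟨N, hN⟩ := eventually_atTop.1 hC
  obtain ⟨M, hM⟩ := ((Finset.range N).image B).exists_le
  refine ⟨max C M, fun n => ?_⟩
  rcases le_or_gt N n with hn | hn
  · exact hmono n (le_max_left C M) (hN n hn)
  · have hBM : B n ≤ M := hM _ (Finset.mem_image_of_mem B (Finset.mem_range.2 hn))
    exact hmono n (hBM.trans (le_max_right C M)) (hB n)

lemma sum_range_sq_le_div (hc : 0 < c) (hu : ∀ n, 0 ≤ u n)
    (hstep : ∀ n, c * u (n + 1) ^ 2 ≤ u n - u (n + 1)) (n : ℕ) :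
    ∑ k ∈ Finset.range n, u (k + 1) ^ 2 ≤ u 0 / c := by
  rw [le_div_iff₀' hc, Finset.mul_sum]
  calc ∑ k ∈ Finset.range n, c * u (k + 1) ^ 2
      ≤ ∑ k ∈ Finset.range n, (u k - u (k + 1)) := Finset.sum_le_sum fun k _ => hstep k
    _ = u 0 - u n := Finset.sum_range_sub' u n
    _ ≤ u 0 := sub_le_self _ (hu n)

lemma inv_sub_inv_mem_Icc {x y : ℝ} (hx : 0 < x) (hx1 : x ≤ 1) (hc : 0 < c)
    (hlo : c * x ^ 2 ≤ y - x) (hhi : y - x ≤ C * x ^ 2) :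
    x⁻¹ - y⁻¹ ∈ Icc (c / (1 + C)) C := by
  have hxy : x ≤ y := by nlinarith [sq_nonneg x]
  have hy : 0 < y := hx.trans_le hxy
  have hC : 0 < C := by nlinarith [sq_pos_of_pos hx]
  have hyC : y ≤ (1 + C) * x := by nlinarith [mul_pos hC hx]
  rw [inv_sub_inv hx.ne' hy.ne', mem_Icc, div_le_div_iff₀ (by positivity) (by positivity),
    div_le_iff₀ (by positivity)]
  constructor
  · nlinarith [mul_le_mul_of_nonneg_left hyC (mul_pos hc hx).le]
  · nlinarith [mul_le_mul_of_nonneg_left hxy (mul_pos hC hx).le]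

lemma inv_mem_Icc_of_quadratic_decay (hc : 0 < c) (hu : ∀ n, 0 < u n) (hu1 : ∀ n, u n ≤ 1)
    (hlo : ∀ n, c * u (n + 1) ^ 2 ≤ u n - u (n + 1))
    (hhi : ∀ n, u n - u (n + 1) ≤ C * u (n + 1) ^ 2) (n : ℕ) :
    (u n)⁻¹ ∈ Icc ((u 0)⁻¹ + c / (1 + C) * n) ((u 0)⁻¹ + C * n) := by
  induction n with
  | zero => simp
  | succ n ih =>
    have hstep := inv_sub_inv_mem_Icc (hu (n + 1)) (hu1 (n + 1)) hc (hlo n) (hhi n)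
    rw [mem_Icc] at ih hstep ⊢
    push_cast
    constructor <;> linarith [ih.1, ih.2, hstep.1, hstep.2]

/- The growth factors satisfy `(1 + v) / (1 + u) ≤ 1 + |u - v| ≤ exp |u - v|`. -/
lemma div_le_exp_sum_mul_div (hd : ∀ n, 0 < d n) (he : ∀ n, 0 < e n) (hu : ∀ n, 0 ≤ u n)
    (hdu : ∀ n, d n = d (n + 1) * (1 + u n)) (hev : ∀ n, e n = e (n + 1) * (1 + v n))
    (huv : ∀ n, |u n - v n| ≤ ε n) (n : ℕ) :
    d n / d 0 ≤ Real.exp (∑ k ∈ Finset.range n, ε k) * (e n / e 0) := by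
  induction n with
  | zero => simp [(hd 0).ne', (he 0).ne']
  | succ n ih =>
    have hfactor : 1 + v n ≤ Real.exp (ε n) * (1 + u n) := by
      have hexp : 1 + ε n ≤ Real.exp (ε n) := by linarith [Real.add_one_le_exp (ε n)]
      have hε : 0 ≤ ε n := (abs_nonneg _).trans (huv n)
      have hvu : v n ≤ u n + ε n := by linarith [(abs_le.1 (huv n)).1]
      nlinarith [hu n, mul_nonneg hε (hu n)]
    have hu1 : 0 < 1 + u n := by linarith [hu n]
    calc d (n + 1) / d 0 = d n / d 0 / (1 + u n) := by
          rw [hdu n]; field_simp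
      _ ≤ Real.exp (∑ k ∈ Finset.range n, ε k) * (e n / e 0) / (1 + u n) := by gcongr
      _ = Real.exp (∑ k ∈ Finset.range n, ε k) * (e (n + 1) / e 0) * ((1 + v n) / (1 + u n)) := by
          rw [hev n]; ring
      _ ≤ Real.exp (∑ k ∈ Finset.range n, ε k) * (e (n + 1) / e 0) * Real.exp (ε n) := by
          have := he 0
          have := he (n + 1)
          gcongr
          exact (div_le_iff₀ hu1).2 hfactor
      _ = Real.exp (∑ k ∈ Finset.range (n + 1), ε k) * (e (n + 1) / e 0) := by
          rw [Finset.sum_range_succ, Real.exp_add]; ring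

lemma exp_sub_one_le_mul_exp {t T : ℝ} (ht : 0 ≤ t) (htT : t ≤ T) :
    Real.exp t - 1 ≤ t * Real.exp T := by
  have hneg : (1 - t) * Real.exp t ≤ 1 := by
    have := mul_le_mul_of_nonneg_right (Real.one_sub_le_exp_neg t) (Real.exp_nonneg t)
    rwa [← Real.exp_add, neg_add_cancel, Real.exp_zero] at this
  linarith [mul_le_mul_of_nonneg_left (Real.exp_le_exp.2 htT) ht]

lemma abs_sub_le_of_le_exp_mul {a b B t T : ℝ} (ht : 0 ≤ t) (htT : t ≤ T) (ha0 : 0 ≤ a)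
    (hab : a ≤ Real.exp t * b) (hba : b ≤ Real.exp t * a) (ha : a ≤ B) (hb : b ≤ B) :
    |a - b| ≤ t * Real.exp T * B := by
  have hexp := exp_sub_one_le_mul_exp ht htT
  have hexp0 : 0 ≤ Real.exp t - 1 := sub_nonneg.2 (Real.one_le_exp ht)
  have hB : (Real.exp t - 1) * B ≤ t * Real.exp T * B :=
    mul_le_mul_of_nonneg_right hexp (ha0.trans ha)
  rw [abs_sub_le_iff]
  constructor
  · linarith [mul_le_mul_of_nonneg_left hb hexp0]
  · linarith [mul_le_mul_of_nonneg_left ha hexp0]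

lemma tendsto_iterate_zero_of_rightInverse {g T : ℝ → ℝ} {b x : ℝ}
    (hg : MapsTo g (Ioo 0 b) (Ioo 0 b)) (hT : ContinuousOn T (Ioo 0 b))
    (hTg : ∀ y ∈ Ioo 0 b, T (g y) = y) (hlt : ∀ y ∈ Ioo 0 b, y < T y) (hx : x ∈ Ioo 0 b) :
    Tendsto (fun n => g^[n] x) atTop (𝓝 0) := by
  have hmem (n : ℕ) : g^[n] x ∈ Ioo 0 b := hg.iterate n hx
  have hsucc (n : ℕ) : T (g^[n + 1] x) = g^[n] x := by
    rw [Function.iterate_succ_apply']; exact hTg _ (hmem n)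
  have hanti : Antitone fun n => g^[n] x :=
    antitone_nat_of_succ_le fun n => ((hlt _ (hmem (n + 1))).trans_eq (hsucc n)).le
  have hbdd : BddBelow (range fun n => g^[n] x) := ⟨0, by rintro _ ⟨n, rfl⟩; exact (hmem n).1.le⟩
  set l := ⨅ n, g^[n] x
  have hlim : Tendsto (fun n => g^[n] x) atTop (𝓝 l) := tendsto_atTop_ciInf hanti hbdd
  rcases (le_ciInf fun n => (hmem n).1.le : 0 ≤ l).eq_or_lt with hl | hl
  · rwa [← show 0 = l from hl] at hlim
  have hlb : l ∈ Ioo 0 b := ⟨hl, (ciInf_le hbdd 0).trans_lt hx.2⟩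
  have hTl : Tendsto (fun n => T (g^[n + 1] x)) atTop (𝓝 (T l)) :=
    ((hT.continuousAt (isOpen_Ioo.mem_nhds hlb)).tendsto).comp (hlim.comp (tendsto_add_atTop_nat 1))
  have hfix : T l = l := tendsto_nhds_unique hTl (by simpa only [hsucc] using hlim)
  exact absurd (hlt l hlb) hfix.not_gt

end Sequences

section Averages

lemma exists_tendsto_intervalAverage {h : ℝ → ℝ} {α β x : ℝ} (hh : ContinuousOn h (Icc α β))
    (hαβ : α < β) (hx : x ∈ Icc α β) :
    ∃ p q : ℕ → ℝ, (∀ n, α ≤ p n ∧ p n < q n ∧ q n ≤ β) ∧ Tendsto p atTop (𝓝 x) ∧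
      Tendsto (fun n => ⨍ t in p n..q n, h t) atTop (𝓝 (h x)) := by
  let ε : ℕ → ℝ := fun n => 1 / ((n : ℝ) + 1)
  have hε : Tendsto ε atTop (𝓝 0) := tendsto_one_div_add_atTop_nhds_zero_nat
  have hε0 (n : ℕ) : 0 < ε n := by positivity
  have hε1 (n : ℕ) : ε n ≤ 1 := div_le_one_of_le₀ (by simp) (by positivity)
  let p : ℕ → ℝ := fun n => x - ε n * (x - α)
  let q : ℕ → ℝ := fun n => x + ε n * (β - x)
  have hp : Tendsto p atTop (𝓝 x) := by simpa using (hε.mul_const (x - α)).const_sub x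
  have hq : Tendsto q atTop (𝓝 x) := by simpa using (hε.mul_const (β - x)).const_add x
  have hpq (n : ℕ) : α ≤ p n ∧ p n < q n ∧ q n ≤ β := by
    have hα := mul_le_mul_of_nonneg_right (hε1 n) (sub_nonneg.2 hx.1)
    have hβ := mul_le_mul_of_nonneg_right (hε1 n) (sub_nonneg.2 hx.2)
    have hlen := mul_pos (hε0 n) (sub_pos.2 hαβ)
    refine ⟨?_, ?_, ?_⟩ <;> simp only [p, q] <;> linarith
  have hsub (n : ℕ) : Icc (p n) (q n) ⊆ Icc α β := Icc_subset_Icc (hpq n).1 (hpq n).2.2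
  have hmean (n : ℕ) : ∃ ξ ∈ Icc (p n) (q n), h ξ = ⨍ t in p n..q n, h t := by
    have hlt := (hpq n).2.1
    obtain ⟨ξ, hξ, hξh⟩ := exists_eq_interval_average hlt.ne
      (by rw [uIcc_of_le hlt.le]; exact hh.mono (hsub n))
    exact ⟨ξ, Ioo_subset_Icc_self (by rwa [uIoo_of_le hlt.le] at hξ), hξh⟩
  choose ξ hξ hξh using hmean
  have hξx : Tendsto ξ atTop (𝓝 x) :=
    tendsto_of_tendsto_of_tendsto_of_le_of_le hp hq (fun n => (hξ n).1) fun n => (hξ n).2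
  refine ⟨p, q, hpq, hp, ?_⟩
  simp only [← hξh]
  exact (hh x hx).tendsto.comp
    (tendsto_nhdsWithin_iff.2 ⟨hξx, Eventually.of_forall fun n => hsub n (hξ n)⟩)

end Averages

section Variation

variable {g : ℝ → ℝ} {s : Set ℝ} {a b l u : ℝ}

lemma eVariationOn_le_of_monotoneOn_of_mapsTo (hg : MonotoneOn g s) (hs : MapsTo g s (Icc l u)) :
    eVariationOn g s ≤ ENNReal.ofReal (u - l) := by
  rw [eVariationOn.eq_biSup_inter_Icc]
  refine iSup₂_le fun p hp => ?_
  rw [hg.eVariationOn_eq hp.1 hp.2.1]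
  exact ENNReal.ofReal_le_ofReal (sub_le_sub (hs hp.2.1).2 (hs hp.1).1)

lemma eVariationOn_le_of_antitoneOn_of_mapsTo (hg : AntitoneOn g s) (hs : MapsTo g s (Icc l u)) :
    eVariationOn g s ≤ ENNReal.ofReal (u - l) := by
  have hneg : eVariationOn (fun x => -g x) s = eVariationOn g s := by
    simp only [eVariationOn, edist_neg_neg]
  rw [← hneg, ← neg_sub_neg]
  exact eVariationOn_le_of_monotoneOn_of_mapsTo hg.neg
    fun x hx => ⟨neg_le_neg (hs hx).2, neg_le_neg (hs hx).1⟩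

lemma eVariationOn_le_of_isGreatest_of_eq_zero (ha : IsGreatest s a) (hga : 0 ≤ g a)
    (hg : ∀ x ∈ s, x ≠ a → g x = 0) : eVariationOn g s ≤ ENNReal.ofReal (g a) := by
  have hmem : MapsTo g s (Icc 0 (g a)) := fun x hx => by
    rcases eq_or_ne x a with rfl | hxa
    · exact right_mem_Icc.2 hga
    · rw [hg x hx hxa]; exact left_mem_Icc.2 hga
  have hmono : MonotoneOn g s := fun x hx y hy hxy => by
    rcases eq_or_ne x a with rfl | hxa
    · rw [hxy.antisymm (ha.2 hy)]
    · rw [hg x hx hxa]; exact (hmem hy).1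
  simpa using eVariationOn_le_of_monotoneOn_of_mapsTo hmono hmem

lemma eVariationOn_le_of_isLeast_of_eq_zero (ha : IsLeast s a) (hga : 0 ≤ g a)
    (hg : ∀ x ∈ s, x ≠ a → g x = 0) : eVariationOn g s ≤ ENNReal.ofReal (g a) := by
  have hmem : MapsTo g s (Icc 0 (g a)) := fun x hx => by
    rcases eq_or_ne x a with rfl | hxa
    · exact right_mem_Icc.2 hga
    · rw [hg x hx hxa]; exact left_mem_Icc.2 hga
  have hanti : AntitoneOn g s := fun x hx y hy hxy => by
    rcases eq_or_ne y a with rfl | hya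
    · rw [hxy.antisymm (ha.2 hx)]
    · rw [hg y hy hya]; exact (hmem hx).1
  simpa using eVariationOn_le_of_antitoneOn_of_mapsTo hanti hmem

lemma eVariationOn_indicator_Icc_le (hab : a ≤ b) (ha : 0 ≤ g a) (hb : 0 ≤ g b) :
    eVariationOn (indicator (Icc a b) g) univ ≤
      ENNReal.ofReal (g a) + (eVariationOn g (Icc a b) + ENNReal.ofReal (g b)) := by
  set f := indicator (Icc a b) g
  have hfa : f a = g a := indicator_of_mem (left_mem_Icc.2 hab) g
  have hfb : f b = g b := indicator_of_mem (right_mem_Icc.2 hab) g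
  have hleft : eVariationOn f (Iic a) ≤ ENNReal.ofReal (g a) :=
    hfa ▸ eVariationOn_le_of_isGreatest_of_eq_zero isGreatest_Iic (hfa ▸ ha)
      fun x hx hxa => indicator_of_notMem (fun h => hxa (le_antisymm hx h.1)) g
  have hright : eVariationOn f (Ici b) ≤ ENNReal.ofReal (g b) :=
    hfb ▸ eVariationOn_le_of_isLeast_of_eq_zero isLeast_Ici (hfb ▸ hb)
      fun x hx hxb => indicator_of_notMem (fun h => hxb (le_antisymm h.2 hx)) g
  have hmid : eVariationOn f (Icc a b) = eVariationOn g (Icc a b) :=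
    eVariationOn.congr fun x hx => indicator_of_mem hx g
  rw [← Iic_union_Ici (a := a), eVariationOn.union f isGreatest_Iic isLeast_Ici,
    ← Icc_union_Ici_eq_Ici hab, eVariationOn.union f (isGreatest_Icc hab) isLeast_Ici, hmid]
  gcongr

lemma eVariationOn_Icc_le_of_abs_sub_mul_le {B : ℝ} (hB : 0 ≤ B)
    (hg : ∀ x ∈ Icc a b, ∀ y ∈ Icc a b, |g x - g y| * (b - a) ≤ B * |x - y|) :
    eVariationOn g (Icc a b) ≤ ENNReal.ofReal B := by
  rcases le_or_gt b a with hba | hab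
  · rw [eVariationOn.subsingleton g (subsingleton_Icc_of_ge hba)]
    exact zero_le
  have hlen : 0 < b - a := sub_pos.2 hab
  have hL : 0 ≤ B / (b - a) := div_nonneg hB hlen.le
  have hLip : LipschitzOnWith (B / (b - a)).toNNReal g (Icc a b) :=
    LipschitzOnWith.of_dist_le_mul fun x hx y hy => by
      rw [Real.coe_toNNReal _ hL, div_mul_eq_mul_div, le_div_iff₀ hlen]
      exact hg x hx y hy
  calc eVariationOn g (Icc a b) ≤ (B / (b - a)).toNNReal * eVariationOn id (Icc a b) :=
        hLip.comp_eVariationOn_le (mapsTo_id _)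
    _ = ENNReal.ofReal (B / (b - a) * (b - a)) := by
        rw [eVariationOn_id_Icc, ENNReal.ofReal_mul hL]; rfl
    _ = ENNReal.ofReal B := by rw [div_mul_cancel₀ B hlen.ne']

lemma eVariationOn_Icc_le_of_antitoneOn {z : ℕ → ℝ} {B : ℝ} {i j : ℕ} (hB : 0 ≤ B)
    (hz : AntitoneOn z (Ici i))
    (hg : ∀ n ≥ i, eVariationOn g (Icc (z (n + 1)) (z n)) ≤ ENNReal.ofReal B) (hij : i ≤ j) :
    eVariationOn g (Icc (z j) (z i)) ≤ ENNReal.ofReal (B * (j - i)) := by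
  induction j, hij using Nat.le_induction with
  | base => simp
  | succ j hij ih =>
    have hsplit := eVariationOn.Icc_add_Icc g (s := univ) (hz hij (hij.trans j.le_succ) j.le_succ)
      (hz (mem_Ici.2 le_rfl) hij hij) (mem_univ _)
    simp only [univ_inter] at hsplit
    have hji : (0 : ℝ) ≤ j - i := sub_nonneg.2 (Nat.cast_le.2 hij)
    calc eVariationOn g (Icc (z (j + 1)) (z i))
        = eVariationOn g (Icc (z (j + 1)) (z j)) + eVariationOn g (Icc (z j) (z i)) := hsplit.symm
      _ ≤ ENNReal.ofReal B + ENNReal.ofReal (B * (j - i)) := add_le_add (hg j hij) ih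
      _ = ENNReal.ofReal (B * ((j + 1 : ℕ) - i)) := by
          rw [← ENNReal.ofReal_add hB (by positivity)]; push_cast; ring_nf

lemma eVariationOn_indicator_Icc_le_of_antitoneOn {z : ℕ → ℝ} {B A A' : ℝ} {i j : ℕ} (hB : 0 ≤ B)
    (hz : AntitoneOn z (Ici i))
    (hg : ∀ n ≥ i, eVariationOn g (Icc (z (n + 1)) (z n)) ≤ ENNReal.ofReal B) (hij : i ≤ j)
    (hi : g (z i) ∈ Icc 0 A) (hj : g (z j) ∈ Icc 0 A') :
    eVariationOn (indicator (Icc (z j) (z i)) g) univ ≤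
      ENNReal.ofReal (A + A' + B * (j - i)) := by
  have hA : 0 ≤ A := hi.1.trans hi.2
  have hA' : 0 ≤ A' := hj.1.trans hj.2
  have hlen : (0 : ℝ) ≤ j - i := sub_nonneg.2 (Nat.cast_le.2 hij)
  calc eVariationOn (indicator (Icc (z j) (z i)) g) univ
      ≤ ENNReal.ofReal (g (z j)) + (eVariationOn g (Icc (z j) (z i)) + ENNReal.ofReal (g (z i))) :=
        eVariationOn_indicator_Icc_le (hz (mem_Ici.2 le_rfl) hij hij) hj.1 hi.1
    _ ≤ ENNReal.ofReal A' + (ENNReal.ofReal (B * (j - i)) + ENNReal.ofReal A) := by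
        gcongr
        · exact hj.2
        · exact eVariationOn_Icc_le_of_antitoneOn hB hz hg hij
        · exact hi.2
    _ = ENNReal.ofReal (A + A' + B * (j - i)) := by
        rw [← ENNReal.ofReal_add (by positivity) hA, ← ENNReal.ofReal_add hA' (by positivity)]
        ring_nf

end Variation

/-- The displacement `w x = f x - x` of a map `f` near a neutral fixed point at `0`, normalised on
`(0, δ)`. The condition `(1 + c) * w x ≤ x * w' x` says that `w x / x` grows at least like `x ^ c`,
while `x * w' x ≤ 2 * w x` says that `w x / x ^ 2` does not grow. -/
structure NeutralGerm (δ c K : ℝ) (w : ℝ → ℝ) : Prop where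
  contDiffOn : ContDiffOn ℝ 2 w (Ioo 0 δ)
  c_pos : 0 < c
  K_nonneg : 0 ≤ K
  pos : ∀ x ∈ Ioo 0 δ, 0 < w x
  le_self : ∀ x ∈ Ioo 0 δ, w x ≤ x
  le_mul_deriv : ∀ x ∈ Ioo 0 δ, (1 + c) * w x ≤ x * deriv w x
  mul_deriv_le : ∀ x ∈ Ioo 0 δ, x * deriv w x ≤ 2 * w x
  sq_mul_abs_deriv2_le : ∀ x ∈ Ioo 0 δ, x ^ 2 * |deriv (deriv w) x| ≤ K * w x

namespace NeutralGerm

variable {δ c K x y ξ η : ℝ} {w : ℝ → ℝ}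

lemma hasDerivAt (hw : NeutralGerm δ c K w) (hx : x ∈ Ioo 0 δ) : HasDerivAt w (deriv w x) x :=
  ((hw.contDiffOn.contDiffAt (isOpen_Ioo.mem_nhds hx)).differentiableAt two_ne_zero).hasDerivAt

lemma hasDerivAt_deriv (hw : NeutralGerm δ c K w) (hx : x ∈ Ioo 0 δ) :
    HasDerivAt (deriv w) (deriv (deriv w) x) x :=
  (((hw.contDiffOn.deriv_of_isOpen (m := 1) isOpen_Ioo (by norm_num)).contDiffAt
    (isOpen_Ioo.mem_nhds hx)).differentiableAt one_ne_zero).hasDerivAt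

lemma div_self_pos (hw : NeutralGerm δ c K w) (hx : x ∈ Ioo 0 δ) : 0 < w x / x :=
  div_pos (hw.pos x hx) hx.1

lemma div_self_le_one (hw : NeutralGerm δ c K w) (hx : x ∈ Ioo 0 δ) : w x / x ≤ 1 :=
  (div_le_one hx.1).2 (hw.le_self x hx)

lemma mul_div_self_le_deriv (hw : NeutralGerm δ c K w) (hx : x ∈ Ioo 0 δ) :
    (1 + c) * (w x / x) ≤ deriv w x := by
  rw [← mul_div_assoc, div_le_iff₀' hx.1]
  exact hw.le_mul_deriv x hx

lemma deriv_le_mul_div_self (hw : NeutralGerm δ c K w) (hx : x ∈ Ioo 0 δ) :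
    deriv w x ≤ 2 * (w x / x) := by
  rw [← mul_div_assoc, le_div_iff₀' hx.1]
  exact hw.mul_deriv_le x hx

lemma deriv_pos (hw : NeutralGerm δ c K w) (hx : x ∈ Ioo 0 δ) : 0 < deriv w x :=
  (mul_pos (by linarith [hw.c_pos]) (hw.div_self_pos hx)).trans_le (hw.mul_div_self_le_deriv hx)

lemma strictMonoOn (hw : NeutralGerm δ c K w) : StrictMonoOn w (Ioo 0 δ) :=
  strictMonoOn_of_deriv_pos (convex_Ioo 0 δ) hw.contDiffOn.continuousOn fun _ hx =>
    hw.deriv_pos (interior_subset hx)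

lemma monotoneOn_div_self (hw : NeutralGerm δ c K w) : MonotoneOn (fun x => w x / x) (Ioo 0 δ) := by
  have hder : ∀ x ∈ Ioo 0 δ, HasDerivAt (fun x => w x / x) ((deriv w x * x - w x * 1) / x ^ 2) x :=
    fun x hx => (hw.hasDerivAt hx).div (hasDerivAt_id x) hx.1.ne'
  refine monotoneOn_of_deriv_nonneg (convex_Ioo 0 δ)
    (fun x hx => (hder x hx).continuousAt.continuousWithinAt)
    (fun x hx => (hder x (interior_subset hx)).differentiableAt.differentiableWithinAt) ?_
  intro x hx
  replace hx := interior_subset hx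
  rw [(hder x hx).deriv]
  have := mul_pos hw.c_pos (hw.pos x hx)
  exact div_nonneg (by linarith [hw.le_mul_deriv x hx]) (sq_nonneg x)

lemma antitoneOn_div_sq (hw : NeutralGerm δ c K w) :
    AntitoneOn (fun x => w x / x ^ 2) (Ioo 0 δ) := by
  have hder : ∀ x ∈ Ioo 0 δ, HasDerivAt (fun x => w x / x ^ 2)
      ((deriv w x * x ^ 2 - w x * (2 * x)) / (x ^ 2) ^ 2) x := fun x hx => by
    have hsq : HasDerivAt (fun x : ℝ => x ^ 2) (2 * x) x := by simpa using hasDerivAt_pow 2 x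
    exact (hw.hasDerivAt hx).div hsq (pow_ne_zero 2 hx.1.ne')
  refine antitoneOn_of_deriv_nonpos (convex_Ioo 0 δ)
    (fun x hx => (hder x hx).continuousAt.continuousWithinAt)
    (fun x hx => (hder x (interior_subset hx)).differentiableAt.differentiableWithinAt) ?_
  intro x hx
  replace hx := interior_subset hx
  rw [(hder x hx).deriv]
  exact div_nonpos_of_nonpos_of_nonneg (by nlinarith [hw.mul_deriv_le x hx, hx.1]) (by positivity)

lemma abs_deriv_sub_le (hw : NeutralGerm δ c K w) (hx : 0 < x) (hξ : ξ ∈ Ico x δ)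
    (hη : η ∈ Ico x δ) : |deriv w ξ - deriv w η| ≤ K * (w x / x ^ 2) * |ξ - η| := by
  have hmem : ∀ t ∈ Ico x δ, t ∈ Ioo 0 δ := fun t ht => ⟨hx.trans_le ht.1, ht.2⟩
  refine (convex_Ico x δ).norm_image_sub_le_of_norm_hasDerivWithin_le
    (fun t ht => (hw.hasDerivAt_deriv (hmem t ht)).hasDerivWithinAt) (fun t ht => ?_) hη hξ
  have ht0 : 0 < t := hx.trans_le ht.1
  calc ‖deriv (deriv w) t‖ ≤ K * w t / t ^ 2 :=
        (le_div_iff₀' (by positivity)).2 (hw.sq_mul_abs_deriv2_le t (hmem t ht))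
    _ = K * (w t / t ^ 2) := mul_div_assoc _ _ _
    _ ≤ K * (w x / x ^ 2) := mul_le_mul_of_nonneg_left
        (hw.antitoneOn_div_sq ⟨hx, ht.1.trans_lt ht.2⟩ (hmem t ht) ht.1) hw.K_nonneg

lemma abs_deriv_sub_le_mul_sq (hw : NeutralGerm δ c K w) (hx : 0 < x) (hξ : ξ ∈ Ico x δ)
    (hη : η ∈ Ico x δ) {a : ℝ} (hξη : |ξ - η| ≤ a * w x) :
    |deriv w ξ - deriv w η| ≤ K * a * (w x / x) ^ 2 := by
  have hwx := hw.pos x ⟨hx, hξ.1.trans_lt hξ.2⟩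
  have := hw.K_nonneg
  calc |deriv w ξ - deriv w η| ≤ K * (w x / x ^ 2) * |ξ - η| := hw.abs_deriv_sub_le hx hξ hη
    _ ≤ K * (w x / x ^ 2) * (a * w x) := by gcongr
    _ = K * a * (w x / x) ^ 2 := by ring

lemma exists_deriv_mul_eq_sub (hw : NeutralGerm δ c K w) (hx : x ∈ Ioo 0 δ) (hy : y ∈ Ioo 0 δ)
    (hxy : x < y) : ∃ ξ ∈ Ioo x y, deriv w ξ * (y - x) = w y - w x := by
  have hsub : Icc x y ⊆ Ioo 0 δ := fun t ht => ⟨hx.1.trans_le ht.1, ht.2.trans_lt hy.2⟩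
  obtain ⟨ξ, hξ, hslope⟩ := exists_deriv_eq_slope w hxy
    (hw.contDiffOn.continuousOn.mono hsub) fun t ht =>
    (hw.hasDerivAt (hsub (Ioo_subset_Icc_self ht))).differentiableAt.differentiableWithinAt
  exact ⟨ξ, hξ, by rw [hslope, div_mul_cancel₀ _ (sub_pos.2 hxy).ne']⟩

/- With `u x = w x / x` and `T x = x + w x`, the mean value theorem gives
`u (T x) - u x = u x * (w' ξ - u x) / (1 + u x)`, and `w' ξ` is comparable to `u x`. -/
lemma div_self_step (hw : NeutralGerm δ c K w) (hx : x ∈ Ioo 0 δ) (hTx : x + w x < δ) :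
    c / 2 * (w x / x) ^ 2 ≤ w (x + w x) / (x + w x) - w x / x ∧
      w (x + w x) / (x + w x) - w x / x ≤ 3 * (w x / x) ^ 2 := by
  have hx0 := hx.1
  have hwx := hw.pos x hx
  obtain ⟨ξ, ⟨hξx, hξT⟩, hξ⟩ :=
    hw.exists_deriv_mul_eq_sub hx ⟨by linarith, hTx⟩ (lt_add_of_pos_right x hwx)
  have hξmem : ξ ∈ Ioo 0 δ := ⟨hx0.trans hξx, hξT.trans hTx⟩
  have hξ0 : 0 < ξ := hξmem.1
  have hu1 := hw.div_self_le_one hx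
  have hu := hw.div_self_pos hx
  set u := w x / x with hudef
  have hwu : w x = u * x := by rw [hudef, div_mul_cancel₀ _ hx0.ne']
  have hdiff : w (x + w x) / (x + w x) - u = u * (deriv w ξ - u) / (1 + u) := by
    have hTw : w (x + w x) = w x * (1 + deriv w ξ) := by linarith
    rw [hTw, hwu]
    field_simp
    ring
  have hlo : (1 + c) * u ≤ deriv w ξ :=
    (mul_le_mul_of_nonneg_left (hw.monotoneOn_div_self hx hξmem hξx.le)
      (by linarith [hw.c_pos])).trans (hw.mul_div_self_le_deriv hξmem)
  have hhi : deriv w ξ ≤ 4 * u :=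
    calc deriv w ξ ≤ 2 * (w ξ / ξ) := hw.deriv_le_mul_div_self hξmem
      _ = 2 * (w ξ / ξ ^ 2 * ξ) := by field_simp
      _ ≤ 2 * (w x / x ^ 2 * (x + w x)) := by
          have hsq := hw.antitoneOn_div_sq hx hξmem hξx.le
          gcongr 2 * ?_
          exact mul_le_mul hsq hξT.le hξ0.le (by positivity)
      _ = 2 * (u * (1 + u)) := by rw [hwu]; field_simp
      _ ≤ 4 * u := by nlinarith
  rw [hdiff, le_div_iff₀ (by linarith), div_le_iff₀ (by linarith)]
  have hcu := mul_pos hw.c_pos (mul_pos hu hu)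
  constructor <;> nlinarith [mul_pos hu hu, mul_pos (mul_pos hu hu) hu]

end NeutralGerm

/-- A `NeutralGerm` together with the inverse branch `g` of `x ↦ x + w x` fixing `0`. -/
structure NeutralBranch (δ c K : ℝ) (w g : ℝ → ℝ) : Prop extends NeutralGerm δ c K w where
  mapsTo : MapsTo g (Ioo 0 δ) (Ioo 0 δ)
  add_eq : ∀ x ∈ Ioo 0 δ, g x + w (g x) = x

namespace NeutralBranch

variable {δ c K p q r s x y α β : ℝ} {w g : ℝ → ℝ}

lemma lt_self (hg : NeutralBranch δ c K w g) (hx : x ∈ Ioo 0 δ) : g x < x := by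
  linarith [hg.add_eq x hx, hg.pos _ (hg.mapsTo hx)]

lemma strictMonoOn (hg : NeutralBranch δ c K w g) : StrictMonoOn g (Ioo 0 δ) := by
  intro x hx y hy hxy
  by_contra! hle
  have hwle := hg.toNeutralGerm.strictMonoOn.monotoneOn (hg.mapsTo hy) (hg.mapsTo hx) hle
  linarith [hg.add_eq x hx, hg.add_eq y hy]

lemma iterate_mem (hg : NeutralBranch δ c K w g) (hx : x ∈ Ioo 0 δ) (n : ℕ) :
    g^[n] x ∈ Ioo 0 δ :=
  hg.mapsTo.iterate n hx

lemma iterate_strictMonoOn (hg : NeutralBranch δ c K w g) (n : ℕ) :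
    StrictMonoOn g^[n] (Ioo 0 δ) := by
  induction n with
  | zero => exact strictMonoOn_id
  | succ n ih =>
    rw [Function.iterate_succ']
    exact hg.strictMonoOn.comp ih (hg.mapsTo.iterate n)

lemma iterate_succ_add (hg : NeutralBranch δ c K w g) (hx : x ∈ Ioo 0 δ) (n : ℕ) :
    g^[n + 1] x + w (g^[n + 1] x) = g^[n] x := by
  rw [Function.iterate_succ_apply']
  exact hg.add_eq _ (hg.iterate_mem hx n)

lemma iterate_sub_le_sub (hg : NeutralBranch δ c K w g) (hp : p ∈ Ioo 0 δ) (hq : q ∈ Ioo 0 δ)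
    (hpq : p ≤ q) (n : ℕ) : g^[n] q - g^[n] p ≤ q - p := by
  induction n with
  | zero => rfl
  | succ n ih =>
    have hw := hg.toNeutralGerm.strictMonoOn.monotoneOn (hg.iterate_mem hp (n + 1))
      (hg.iterate_mem hq (n + 1)) ((hg.iterate_strictMonoOn (n + 1)).monotoneOn hp hq hpq)
    linarith [hg.iterate_succ_add hp n, hg.iterate_succ_add hq n]

lemma tendsto_iterate (hg : NeutralBranch δ c K w g) (hx : x ∈ Ioo 0 δ) :
    Tendsto (fun n => g^[n] x) atTop (𝓝 0) :=
  tendsto_iterate_zero_of_rightInverse hg.mapsTo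
    (continuousOn_id.add hg.contDiffOn.continuousOn) hg.add_eq
    (fun y hy => lt_add_of_pos_right y (hg.pos y hy)) hx

lemma hasSum_displacement (hg : NeutralBranch δ c K w g) (hx : x ∈ Ioo 0 δ) :
    HasSum (fun k => w (g^[k] x)) (x + w x) := by
  have htele (n : ℕ) : ∑ k ∈ Finset.range n, w (g^[k + 1] x) = x - g^[n] x := by
    refine Eq.trans (Finset.sum_congr rfl fun k _ => ?_) (Finset.sum_range_sub' (g^[·] x) n)
    exact eq_sub_of_add_eq' (hg.iterate_succ_add hx k)
  rw [← hasSum_nat_add_iff' 1, hasSum_iff_tendsto_nat_of_nonneg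
    fun k => (hg.pos _ (hg.iterate_mem hx (k + 1))).le]
  simpa only [htele, Finset.sum_range_one, Function.iterate_zero_apply, add_sub_cancel_right,
    sub_zero] using (hg.tendsto_iterate hx).const_sub x

lemma div_self_iterate_step (hg : NeutralBranch δ c K w g) (hx : x ∈ Ioo 0 δ) (n : ℕ) :
    c / 2 * (w (g^[n + 1] x) / g^[n + 1] x) ^ 2 ≤
        w (g^[n] x) / g^[n] x - w (g^[n + 1] x) / g^[n + 1] x ∧
      w (g^[n] x) / g^[n] x - w (g^[n + 1] x) / g^[n + 1] x ≤
        3 * (w (g^[n + 1] x) / g^[n + 1] x) ^ 2 := by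
  have hadd := hg.iterate_succ_add hx n
  simpa only [hadd] using hg.div_self_step (hg.iterate_mem hx (n + 1))
    (hadd.trans_lt (hg.iterate_mem hx n).2)

lemma sum_div_self_sq_le (hg : NeutralBranch δ c K w g) (hx : x ∈ Ioo 0 δ) (n : ℕ) :
    ∑ k ∈ Finset.range n, (w (g^[k + 1] x) / g^[k + 1] x) ^ 2 ≤ w x / x / (c / 2) :=
  sum_range_sq_le_div (u := fun k => w (g^[k] x) / g^[k] x) (half_pos hg.c_pos)
    (fun k => (hg.div_self_pos (hg.iterate_mem hx k)).le)
    (fun k => (hg.div_self_iterate_step hx k).1) n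

lemma div_displacement_mem_Icc (hg : NeutralBranch δ c K w g) (hy : y ∈ Ioo 0 δ)
    (hx : x ∈ Icc (g y) y) : x / w x ∈ Icc (y / w y) (g y / w (g y)) := by
  have hgy := hg.mapsTo hy
  have hxmem : x ∈ Ioo 0 δ := ⟨hgy.1.trans_le hx.1, hx.2.trans_lt hy.2⟩
  rw [← inv_div (w x), ← inv_div (w y), ← inv_div (w (g y))]
  exact ⟨inv_anti₀ (hg.div_self_pos hxmem) (hg.monotoneOn_div_self hxmem hy hx.2),
    inv_anti₀ (hg.div_self_pos hgy) (hg.monotoneOn_div_self hgy hxmem hx.1)⟩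

lemma div_displacement_iterate_mem_Icc (hg : NeutralBranch δ c K w g) (hx : x ∈ Ioo 0 δ) (n : ℕ) :
    g^[n] x / w (g^[n] x) ∈ Icc (x / w x + c / 8 * n) (x / w x + 3 * n) := by
  have h := inv_mem_Icc_of_quadratic_decay (u := fun k => w (g^[k] x) / g^[k] x)
    (half_pos hg.c_pos)
    (fun k => hg.div_self_pos (hg.iterate_mem hx k))
    (fun k => hg.div_self_le_one (hg.iterate_mem hx k))
    (fun k => (hg.div_self_iterate_step hx k).1) (fun k => (hg.div_self_iterate_step hx k).2) n
  simp only [inv_div, Function.iterate_zero_apply] at h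
  convert h using 4
  ring

lemma exists_deriv_gap (hg : NeutralBranch δ c K w g) (hp : p ∈ Ioo 0 δ) (hq : q ∈ Ioo 0 δ)
    (hpq : p < q) : ∃ ξ ∈ Ioo (g p) (g q), 0 < deriv w ξ ∧
      q - p = (g q - g p) * (1 + deriv w ξ) := by
  have hgp := hg.mapsTo hp
  have hgq := hg.mapsTo hq
  obtain ⟨ξ, hξ, hslope⟩ := hg.exists_deriv_mul_eq_sub hgp hgq (hg.strictMonoOn hp hq hpq)
  exact ⟨ξ, hξ, hg.deriv_pos ⟨hgp.1.trans hξ.1, hξ.2.trans hgq.2⟩,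
    by linarith [hg.add_eq p hp, hg.add_eq q hq]⟩

lemma exists_deriv_displacement (hg : NeutralBranch δ c K w g) (hx : x ∈ Ioo 0 δ) :
    ∃ η ∈ Ioo (g x) x, 0 < deriv w η ∧ w x = w (g x) * (1 + deriv w η) := by
  have hgx := hg.mapsTo hx
  obtain ⟨η, hη, hslope⟩ := hg.exists_deriv_mul_eq_sub hgx hx (hg.lt_self hx)
  refine ⟨η, hη, hg.deriv_pos ⟨hgx.1.trans hη.1, hη.2.trans hx.2⟩, ?_⟩
  have hgap : x - g x = w (g x) := by linarith [hg.add_eq x hx]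
  rw [hgap] at hslope
  linarith

lemma exists_deriv_gap_iterate (hg : NeutralBranch δ c K w g) (hp : p ∈ Ioo 0 δ)
    (hq : q ∈ Ioo 0 δ) (hpq : p < q) :
    ∃ ξ : ℕ → ℝ, ∀ n, ξ n ∈ Ioo (g^[n + 1] p) (g^[n + 1] q) ∧ 0 < deriv w (ξ n) ∧
      g^[n] q - g^[n] p = (g^[n + 1] q - g^[n + 1] p) * (1 + deriv w (ξ n)) := by
  choose ξ hξ using fun n => hg.exists_deriv_gap (hg.iterate_mem hp n) (hg.iterate_mem hq n)
    (hg.iterate_strictMonoOn n hp hq hpq)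
  exact ⟨ξ, by simpa only [Function.iterate_succ_apply'] using hξ⟩

lemma exists_deriv_displacement_iterate (hg : NeutralBranch δ c K w g) (hx : x ∈ Ioo 0 δ) :
    ∃ η : ℕ → ℝ, ∀ n, η n ∈ Ioo (g^[n + 1] x) (g^[n] x) ∧ 0 < deriv w (η n) ∧
      w (g^[n] x) = w (g^[n + 1] x) * (1 + deriv w (η n)) := by
  choose η hη using fun n => hg.exists_deriv_displacement (hg.iterate_mem hx n)
  exact ⟨η, by simpa only [Function.iterate_succ_apply'] using hη⟩

lemma exp_sum_div_self_sq_le (hg : NeutralBranch δ c K w g) (hx : x ∈ Ioo 0 δ) {a : ℝ} (ha : 0 ≤ a)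
    (n : ℕ) : Real.exp (∑ k ∈ Finset.range n, a * (w (g^[k + 1] x) / g^[k + 1] x) ^ 2) ≤
      Real.exp (2 * a / c * (w x / x)) := by
  rw [← Finset.mul_sum]
  refine Real.exp_le_exp.2
    ((mul_le_mul_of_nonneg_left (hg.sum_div_self_sq_le hx n) ha).trans_eq ?_)
  field_simp

lemma slope_iterate_bounds (hg : NeutralBranch δ c K w g) (hp : p ∈ Ioo 0 δ) (hq : q ∈ Ioo 0 δ)
    (hpq : p < q) (hgq : g q ≤ p) (n : ℕ) :
    slope g^[n] p q ≤ Real.exp (2 * K / c) * (w (g^[n] p) / w p) ∧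
      w (g^[n] p) / w p ≤ Real.exp (2 * K / c) * slope g^[n] p q := by
  obtain ⟨ξ, hξ⟩ := hg.exists_deriv_gap_iterate hp hq hpq
  obtain ⟨η, hη⟩ := hg.exists_deriv_displacement_iterate hp
  have hpn := hg.iterate_mem hp
  have hdist (k : ℕ) : |deriv w (ξ k) - deriv w (η k)| ≤
      K * 1 * (w (g^[k + 1] p) / g^[k + 1] p) ^ 2 := by
    obtain ⟨hξp, hξq⟩ := (hξ k).1
    obtain ⟨hηp, hηq⟩ := (hη k).1
    have hξ' : ξ k < g^[k] p :=
      hξq.trans_le ((hg.iterate_strictMonoOn k).monotoneOn (hg.mapsTo hq) hp hgq)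
    refine hg.abs_deriv_sub_le_mul_sq (hpn (k + 1)).1 ⟨hξp.le, hξ'.trans (hpn k).2⟩
      ⟨hηp.le, hηq.trans (hpn k).2⟩ ?_
    linarith [abs_sub_le_of_le_of_le hξp.le hξ'.le hηp.le hηq.le, hg.iterate_succ_add hp k]
  have hgap (k : ℕ) : 0 < g^[k] q - g^[k] p := sub_pos.2 (hg.iterate_strictMonoOn k hp hq hpq)
  have hwpos (k : ℕ) : 0 < w (g^[k] p) := hg.pos _ (hpn k)
  have hexp : Real.exp (∑ k ∈ Finset.range n, K * 1 * (w (g^[k + 1] p) / g^[k + 1] p) ^ 2) ≤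
      Real.exp (2 * K / c) := by
    have := hg.c_pos
    have := hg.K_nonneg
    refine (hg.exp_sum_div_self_sq_le hp (by positivity) n).trans (Real.exp_le_exp.2 ?_)
    rw [mul_one]
    exact mul_le_of_le_one_right (by positivity) (hg.div_self_le_one hp)
  rw [slope_def_field]
  exact ⟨(div_le_exp_sum_mul_div hgap hwpos (fun k => (hξ k).2.1.le) (fun k => (hξ k).2.2)
      (fun k => (hη k).2.2) hdist n).trans
        (mul_le_mul_of_nonneg_right hexp (div_nonneg (hwpos n).le (hwpos 0).le)),
    (div_le_exp_sum_mul_div hwpos hgap (fun k => (hη k).2.1.le) (fun k => (hη k).2.2)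
      (fun k => (hξ k).2.2) (fun k => abs_sub_comm (deriv w (ξ k)) _ ▸ hdist k) n).trans
        (mul_le_mul_of_nonneg_right hexp (div_nonneg (hgap n).le (hgap 0).le))⟩

lemma iterate_sub_le_mul (hg : NeutralBranch δ c K w g) (hp : p ∈ Ioo 0 δ) (hq : q ∈ Ioo 0 δ)
    (hpq : p < q) (hgq : g q ≤ p) (n : ℕ) :
    g^[n] q - g^[n] p ≤ Real.exp (2 * K / c) * ((q - p) / w p) * w (g^[n] p) := by
  have hslope := (hg.slope_iterate_bounds hp hq hpq hgq n).1
  rw [slope_def_field, div_le_iff₀ (sub_pos.2 hpq)] at hslope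
  exact hslope.trans_eq (by ring)

lemma slope_iterate_le (hg : NeutralBranch δ c K w g) (hα : 0 < α) (hβ : β < δ) (hgβ : g β ≤ α)
    (hαp : α ≤ p) (hpq : p < q) (hqβ : q ≤ β) (hαr : α ≤ r) (hrs : r < s) (hsβ : s ≤ β) (n : ℕ) :
    slope g^[n] p q ≤
      Real.exp (2 * K / c * Real.exp (2 * K / c) * ((β - α) / α)) * slope g^[n] r s := by
  have hmem : ∀ t ∈ Icc α β, t ∈ Ioo 0 δ := fun t ht => ⟨hα.trans_le ht.1, ht.2.trans_lt hβ⟩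
  have hαmem := hmem α ⟨le_rfl, by linarith⟩
  have hβmem := hmem β ⟨by linarith, le_rfl⟩
  have hp := hmem p ⟨hαp, by linarith⟩
  have hq := hmem q ⟨by linarith, hqβ⟩
  have hr := hmem r ⟨hαr, by linarith⟩
  have hs := hmem s ⟨by linarith, hsβ⟩
  obtain ⟨ξ, hξ⟩ := hg.exists_deriv_gap_iterate hp hq hpq
  obtain ⟨η, hη⟩ := hg.exists_deriv_gap_iterate hr hs hrs
  have hwα := hg.pos α hαmem
  set D := Real.exp (2 * K / c)
  have hmono (k : ℕ) := (hg.iterate_strictMonoOn (k + 1)).monotoneOn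
  have hdist (k : ℕ) : |deriv w (ξ k) - deriv w (η k)| ≤
      K * (D * ((β - α) / w α)) * (w (g^[k + 1] α) / g^[k + 1] α) ^ 2 := by
    have hβk := (hg.iterate_mem hβmem (k + 1)).2
    have hξα := (hmono k hαmem hp hαp).trans (hξ k).1.1.le
    have hξβ := (hξ k).1.2.le.trans (hmono k hq hβmem hqβ)
    have hηα := (hmono k hαmem hr hαr).trans (hη k).1.1.le
    have hηβ := (hη k).1.2.le.trans (hmono k hs hβmem hsβ)
    exact hg.abs_deriv_sub_le_mul_sq (hg.iterate_mem hαmem (k + 1)).1 ⟨hξα, hξβ.trans_lt hβk⟩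
      ⟨hηα, hηβ.trans_lt hβk⟩ ((abs_sub_le_of_le_of_le hξα hξβ hηα hηβ).trans
        (hg.iterate_sub_le_mul hαmem hβmem (by linarith) hgβ (k + 1)))
  have hgap {a b : ℝ} (ha : a ∈ Ioo 0 δ) (hb : b ∈ Ioo 0 δ) (hab : a < b) (k : ℕ) :
      0 < g^[k] b - g^[k] a := sub_pos.2 (hg.iterate_strictMonoOn k ha hb hab)
  rw [slope_def_field, slope_def_field]
  refine (div_le_exp_sum_mul_div (hgap hp hq hpq) (hgap hr hs hrs) (fun k => (hξ k).2.1.le)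
    (fun k => (hξ k).2.2) (fun k => (hη k).2.2) hdist n).trans
      (mul_le_mul_of_nonneg_right ?_ (div_nonneg (hgap hr hs hrs n).le (hgap hr hs hrs 0).le))
  have hcoef : 0 ≤ K * (D * ((β - α) / w α)) :=
    mul_nonneg hg.K_nonneg (mul_nonneg (Real.exp_nonneg _) (div_nonneg (by linarith) hwα.le))
  refine (hg.exp_sum_div_self_sq_le hαmem hcoef n).trans_eq ?_
  congr 1
  field_simp

end NeutralBranch

/-- A density `h` on `(0, 1]` invariant under a map whose inverse branches over `(0, δ)` are `g` and
`x ↦ (1 + x) / 2`: the field `transfer` is the transfer operator equation integrated over `[p, q]`.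
On the half `[1/2, 1]` away from the fixed point, `h` is pinched between `m` and `M` and `log h` is
`κ`-Lipschitz. -/
structure InvariantDensity (δ m M κ : ℝ) (g h : ℝ → ℝ) : Prop where
  δ_le_one : δ ≤ 1
  m_pos : 0 < m
  κ_nonneg : 0 ≤ κ
  continuousOn : ContinuousOn h (Ioc 0 1)
  intervalIntegrable : IntervalIntegrable h volume 0 1
  pos : ∀ x ∈ Ioc 0 1, 0 < h x
  transfer : ∀ p ∈ Ioo 0 δ, ∀ q ∈ Ioo 0 δ, p ≤ q →
    ∫ t in p..q, h t = (∫ t in g p..g q, h t) + ∫ t in (1 + p) / 2..(1 + q) / 2, h t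
  mem_Icc : ∀ x ∈ Icc (1 / 2) 1, h x ∈ Icc m M
  le_exp_mul : ∀ x ∈ Icc (1 / 2) 1, ∀ y ∈ Icc (1 / 2) 1, h x ≤ Real.exp (κ * |x - y|) * h y

/-- The average of `h` over the image of `[p, q]` under the inverse branch `x ↦ (1 + x) / 2`. -/
noncomputable def rightAverage (h : ℝ → ℝ) (p q : ℝ) : ℝ :=
  ⨍ t in (1 + p) / 2..(1 + q) / 2, h t

namespace InvariantDensity

variable {δ c K m M κ p q r s x y α β : ℝ} {w g h : ℝ → ℝ}

lemma M_pos (hh : InvariantDensity δ m M κ g h) : 0 < M :=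
  have hmem := hh.mem_Icc 1 (by norm_num)
  hh.m_pos.trans_le (hmem.1.trans hmem.2)

lemma exists_rightAverage_eq (hh : InvariantDensity δ m M κ g h) (hp : 0 < p) (hpq : p < q)
    (hq : q < 1) : ∃ ξ ∈ Ioo ((1 + p) / 2) ((1 + q) / 2), h ξ = rightAverage h p q := by
  have hlt : (1 + p) / 2 < (1 + q) / 2 := by linarith
  have hcont : ContinuousOn h (uIcc ((1 + p) / 2) ((1 + q) / 2)) := by
    rw [uIcc_of_le hlt.le]
    exact hh.continuousOn.mono fun t ht => ⟨by linarith [ht.1], by linarith [ht.2]⟩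
  simpa only [rightAverage, uIoo_of_le hlt.le] using exists_eq_interval_average hlt.ne hcont

lemma rightAverage_mem_Icc (hh : InvariantDensity δ m M κ g h) (hp : 0 < p) (hpq : p < q)
    (hq : q < 1) : rightAverage h p q ∈ Icc m M := by
  obtain ⟨ξ, hξ, hξh⟩ := hh.exists_rightAverage_eq hp hpq hq
  exact hξh ▸ hh.mem_Icc ξ ⟨by linarith [hξ.1], by linarith [hξ.2]⟩

lemma rightAverage_le_exp_mul (hh : InvariantDensity δ m M κ g h) (hα : 0 < α) (hβ : β < 1)
    (hαp : α ≤ p) (hpq : p < q) (hqβ : q ≤ β) (hαr : α ≤ r) (hrs : r < s) (hsβ : s ≤ β) :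
    rightAverage h p q ≤ Real.exp (κ * (β - α)) * rightAverage h r s := by
  obtain ⟨ξ, hξ, hξh⟩ := hh.exists_rightAverage_eq (by linarith) hpq (by linarith)
  obtain ⟨η, hη, hηh⟩ := hh.exists_rightAverage_eq (by linarith) hrs (by linarith)
  have hξmem : ξ ∈ Icc (1 / 2) 1 := ⟨by linarith [hξ.1], by linarith [hξ.2]⟩
  have hηmem : η ∈ Icc (1 / 2) 1 := ⟨by linarith [hη.1], by linarith [hη.2]⟩
  have hξη : |ξ - η| ≤ β - α := by
    rw [abs_le]; constructor <;> linarith [hξ.1, hξ.2, hη.1, hη.2]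
  rw [← hξh, ← hηh]
  refine (hh.le_exp_mul ξ hξmem η hηmem).trans ?_
  have := hh.pos η ⟨by linarith [hηmem.1], hηmem.2⟩
  have := hh.κ_nonneg
  gcongr

lemma intervalIntegrable_of_mem (hh : InvariantDensity δ m M κ g h) (hx : x ∈ Icc 0 1)
    (hy : y ∈ Icc 0 1) : IntervalIntegrable h volume x y :=
  hh.intervalIntegrable.mono_set <| by
    rw [uIcc_of_le (zero_le_one' ℝ)]
    exact uIcc_subset_Icc hx hy

lemma mem_unitInterval (hh : InvariantDensity δ m M κ g h) (hx : x ∈ Ioo 0 δ) : x ∈ Icc 0 1 :=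
  ⟨hx.1.le, hx.2.le.trans hh.δ_le_one⟩

lemma tendsto_integral_iterate (hh : InvariantDensity δ m M κ g h)
    (hg : NeutralBranch δ c K w g) (hp : p ∈ Ioo 0 δ) (hq : q ∈ Ioo 0 δ) :
    Tendsto (fun n => ∫ t in g^[n] p..g^[n] q, h t) atTop (𝓝 0) := by
  let F : ℝ → ℝ := fun x => ∫ t in (0 : ℝ)..x, h t
  have hF : ContinuousWithinAt F (Icc 0 1) 0 := by
    rw [← uIcc_of_le (zero_le_one' ℝ)]
    exact intervalIntegral.continuousOn_primitive_interval' hh.intervalIntegrable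
      left_mem_uIcc 0 left_mem_uIcc
  have hmem {x : ℝ} (hx : x ∈ Ioo 0 δ) (n : ℕ) : g^[n] x ∈ Icc 0 1 :=
    hh.mem_unitInterval (hg.iterate_mem hx n)
  have hlim {x : ℝ} (hx : x ∈ Ioo 0 δ) : Tendsto (fun n => F (g^[n] x)) atTop (𝓝 0) := by
    simpa only [F, Function.comp_def, intervalIntegral.integral_same] using hF.tendsto.comp
      (tendsto_nhdsWithin_iff.2 ⟨hg.tendsto_iterate hx, Eventually.of_forall (hmem hx)⟩)
  have hzero : (0 : ℝ) ∈ Icc 0 1 := left_mem_Icc.2 zero_le_one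
  simpa only [F, sub_zero, intervalIntegral.integral_interval_sub_left
    (hh.intervalIntegrable_of_mem hzero (hmem hq _))
    (hh.intervalIntegrable_of_mem hzero (hmem hp _))] using (hlim hq).sub (hlim hp)

/- The transfer equation telescopes along the neutral branch, and the remainder tends to `0`. -/
lemma hasSum_average (hh : InvariantDensity δ m M κ g h) (hg : NeutralBranch δ c K w g)
    (hp : p ∈ Ioo 0 δ) (hq : q ∈ Ioo 0 δ) (hpq : p < q) :
    HasSum (fun k => slope g^[k] p q / 2 * rightAverage h (g^[k] p) (g^[k] q))
      (⨍ t in p..q, h t) := by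
  have hlt (k : ℕ) : g^[k] p < g^[k] q := hg.iterate_strictMonoOn k hp hq hpq
  have hterm (k : ℕ) : slope g^[k] p q / 2 * rightAverage h (g^[k] p) (g^[k] q) =
      (∫ t in g^[k] p..g^[k] q, h t) / (q - p) -
        (∫ t in g^[k + 1] p..g^[k + 1] q, h t) / (q - p) := by
    have htransfer := hh.transfer _ (hg.iterate_mem hp k) _ (hg.iterate_mem hq k) (hlt k).le
    have hk := sub_pos.2 (hlt k)
    have hlen : (1 + g^[k] q) / 2 - (1 + g^[k] p) / 2 = (g^[k] q - g^[k] p) / 2 := by ring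
    rw [rightAverage, interval_average_eq_div, slope_def_field, htransfer, hlen,
      Function.iterate_succ_apply', Function.iterate_succ_apply']
    field_simp
    ring
  have hnonneg (k : ℕ) : 0 ≤ slope g^[k] p q / 2 * rightAverage h (g^[k] p) (g^[k] q) := by
    have hslope := (hg.iterate_strictMonoOn k).slope_pos hp hq hpq.ne
    have hmem := hh.rightAverage_mem_Icc (hg.iterate_mem hp k).1 (hlt k)
      ((hg.iterate_mem hq k).2.trans_le hh.δ_le_one)
    have := hh.m_pos.trans_le hmem.1
    positivity
  rw [hasSum_iff_tendsto_nat_of_nonneg hnonneg, interval_average_eq_div]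
  have htail := ((hh.tendsto_integral_iterate hg hp hq).div_const (q - p)).const_sub
    ((∫ t in p..q, h t) / (q - p))
  rw [zero_div, sub_zero] at htail
  refine htail.congr fun n => ?_
  simp only [hterm]
  exact (Finset.sum_range_sub' (fun k => (∫ t in g^[k] p..g^[k] q, h t) / (q - p)) n).symm

lemma average_le_exp_mul (hh : InvariantDensity δ m M κ g h) (hg : NeutralBranch δ c K w g)
    (hα : 0 < α) (hβ : β < δ) (hgβ : g β ≤ α) (hαp : α ≤ p) (hpq : p < q) (hqβ : q ≤ β)
    (hαr : α ≤ r) (hrs : r < s) (hsβ : s ≤ β) :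
    ⨍ t in p..q, h t ≤
      Real.exp ((2 * K / c * Real.exp (2 * K / c) + κ) * ((β - α) / α)) * ⨍ t in r..s, h t := by
  have hmem : ∀ t ∈ Icc α β, t ∈ Ioo 0 δ := fun t ht => ⟨hα.trans_le ht.1, ht.2.trans_lt hβ⟩
  have hαmem := hmem α ⟨le_rfl, by linarith⟩
  have hβmem := hmem β ⟨by linarith, le_rfl⟩
  have hp := hmem p ⟨hαp, by linarith⟩
  have hq := hmem q ⟨by linarith, hqβ⟩
  have hr := hmem r ⟨hαr, by linarith⟩
  have hs := hmem s ⟨by linarith, hsβ⟩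
  refine hasSum_le (fun k => ?_) (hh.hasSum_average hg hp hq hpq)
    ((hh.hasSum_average hg hr hs hrs).mul_left _)
  have hstrict := hg.iterate_strictMonoOn k
  have hmono := hstrict.monotoneOn
  have hlt1 {x : ℝ} (hx : x ∈ Ioo 0 δ) : g^[k] x < 1 := (hg.iterate_mem hx k).2.trans_le hh.δ_le_one
  have hslope := hg.slope_iterate_le hα hβ hgβ hαp hpq hqβ hαr hrs hsβ k
  have hright := hh.rightAverage_le_exp_mul (hg.iterate_mem hαmem k).1 (hlt1 hβmem)
    (hmono hαmem hp hαp) (hstrict hp hq hpq) (hmono hq hβmem hqβ)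
    (hmono hαmem hr hαr) (hstrict hr hs hrs) (hmono hs hβmem hsβ)
  have hlen : κ * (g^[k] β - g^[k] α) ≤ κ * ((β - α) / α) := by
    have := hh.κ_nonneg
    gcongr
    exact (hg.iterate_sub_le_sub hαmem hβmem (by linarith) k).trans
      (le_div_self (by linarith) hα (hαmem.2.le.trans hh.δ_le_one))
  have hslope_pos' := hstrict.slope_pos hr hs hrs.ne
  have hright_pos := hh.m_pos.trans_le
    (hh.rightAverage_mem_Icc (hg.iterate_mem hp k).1 (hstrict hp hq hpq) (hlt1 hq)).1
  have hright_pos' := hh.m_pos.trans_le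
    (hh.rightAverage_mem_Icc (hg.iterate_mem hr k).1 (hstrict hr hs hrs) (hlt1 hs)).1
  calc slope g^[k] p q / 2 * rightAverage h (g^[k] p) (g^[k] q)
      ≤ Real.exp (2 * K / c * Real.exp (2 * K / c) * ((β - α) / α)) * slope g^[k] r s / 2 *
          (Real.exp (κ * ((β - α) / α)) * rightAverage h (g^[k] r) (g^[k] s)) := by
        gcongr
        exact hright.trans (by gcongr)
    _ = _ := by rw [add_mul, Real.exp_add]; ring

lemma continuousOn_Ioo (hh : InvariantDensity δ m M κ g h) : ContinuousOn h (Ioo 0 δ) :=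
  hh.continuousOn.mono fun _ hx => ⟨hx.1, hx.2.le.trans hh.δ_le_one⟩

lemma le_exp_mul_near_zero (hh : InvariantDensity δ m M κ g h) (hg : NeutralBranch δ c K w g)
    (hα : 0 < α) (hαβ : α < β) (hβ : β < δ) (hgβ : g β ≤ α) (hx : x ∈ Icc α β)
    (hy : y ∈ Icc α β) :
    h x ≤ Real.exp ((2 * K / c * Real.exp (2 * K / c) + κ) * ((β - α) / α)) * h y := by
  have hcont : ContinuousOn h (Icc α β) := hh.continuousOn_Ioo.mono (Icc_subset_Ioo hα hβ)
  obtain ⟨p, q, hpq, -, hpqx⟩ := exists_tendsto_intervalAverage hcont hαβ hx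
  obtain ⟨r, s, hrs, -, hrsy⟩ := exists_tendsto_intervalAverage hcont hαβ hy
  exact le_of_tendsto_of_tendsto' hpqx (hrsy.const_mul _) fun n =>
    hh.average_le_exp_mul hg hα hβ hgβ (hpq n).1 (hpq n).2.1 (hpq n).2.2
      (hrs n).1 (hrs n).2.1 (hrs n).2.2

lemma le_average (hh : InvariantDensity δ m M κ g h) (hg : NeutralBranch δ c K w g)
    (hp : p ∈ Ioo 0 δ) (hq : q ∈ Ioo 0 δ) (hpq : p < q) (hgq : g q ≤ p) :
    m / (2 * Real.exp (2 * K / c)) * (p / w p) ≤ ⨍ t in p..q, h t := by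
  set D := Real.exp (2 * K / c)
  have hD : 0 < D := Real.exp_pos _
  have hm := hh.m_pos
  have hwp := hg.pos p hp
  calc m / (2 * D) * (p / w p) = m / (2 * D) / w p * p := by ring
    _ ≤ m / (2 * D) / w p * (p + w p) := by gcongr; linarith
    _ ≤ ⨍ t in p..q, h t := ?_
  refine hasSum_le (fun k => ?_) ((hg.hasSum_displacement hp).mul_left _)
    (hh.hasSum_average hg hp hq hpq)
  have hstrict := hg.iterate_strictMonoOn k
  have := hstrict.slope_pos hp hq hpq.ne
  have hright := hh.rightAverage_mem_Icc (hg.iterate_mem hp k).1 (hstrict hp hq hpq)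
    ((hg.iterate_mem hq k).2.trans_le hh.δ_le_one)
  calc m / (2 * D) / w p * w (g^[k] p) = w (g^[k] p) / w p / D / 2 * m := by ring
    _ ≤ slope g^[k] p q / 2 * rightAverage h (g^[k] p) (g^[k] q) := by
      gcongr
      · exact (div_le_iff₀' hD).2 (hg.slope_iterate_bounds hp hq hpq hgq k).2
      · exact hright.1

lemma average_le (hh : InvariantDensity δ m M κ g h) (hg : NeutralBranch δ c K w g)
    (hp : p ∈ Ioo 0 δ) (hq : q ∈ Ioo 0 δ) (hpq : p < q) (hgq : g q ≤ p) :
    ⨍ t in p..q, h t ≤ M * Real.exp (2 * K / c) * (p / w p) := by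
  set D := Real.exp (2 * K / c)
  have : 0 < D := Real.exp_pos _
  have hwp := hg.pos p hp
  have hright (k : ℕ) := hh.rightAverage_mem_Icc (hg.iterate_mem hp k).1
    (hg.iterate_strictMonoOn k hp hq hpq) ((hg.iterate_mem hq k).2.trans_le hh.δ_le_one)
  have hright_pos (k : ℕ) := hh.m_pos.trans_le (hright k).1
  have hM := hh.M_pos
  calc ⨍ t in p..q, h t ≤ D * M / 2 / w p * (p + w p) := ?_
    _ ≤ D * M / 2 / w p * (p + p) := by
        gcongr
        exact hg.le_self p hp
    _ = M * D * (p / w p) := by ring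
  refine hasSum_le (fun k => ?_) (hh.hasSum_average hg hp hq hpq)
    ((hg.hasSum_displacement hp).mul_left _)
  have hwk := hg.pos _ (hg.iterate_mem hp k)
  have := hright_pos k
  calc slope g^[k] p q / 2 * rightAverage h (g^[k] p) (g^[k] q)
      ≤ D * (w (g^[k] p) / w p) / 2 * M := by
        gcongr
        · exact (hg.slope_iterate_bounds hp hq hpq hgq k).1
        · exact (hright k).2
    _ = D * M / 2 / w p * w (g^[k] p) := by ring

lemma mem_Icc_near_zero (hh : InvariantDensity δ m M κ g h) (hg : NeutralBranch δ c K w g)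
    (hx : x ∈ Ioo 0 δ) : h x ∈ Icc (m / (2 * Real.exp (2 * K / c)) * (x / w x))
      (M * Real.exp (2 * K / c) * (x / w x)) := by
  have hgx := hg.mapsTo hx
  have hlt := hg.lt_self hx
  have hcont : ContinuousOn h (Icc (g x) x) := hh.continuousOn_Ioo.mono (Icc_subset_Ioo hgx.1 hx.2)
  obtain ⟨p, q, hpq, hpx, hpqx⟩ := exists_tendsto_intervalAverage hcont hlt ⟨hlt.le, le_rfl⟩
  have hp (n : ℕ) : p n ∈ Ioo 0 δ :=
    ⟨hgx.1.trans_le (hpq n).1, ((hpq n).2.1.trans_le (hpq n).2.2).trans hx.2⟩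
  have hq (n : ℕ) : q n ∈ Ioo 0 δ := ⟨(hp n).1.trans (hpq n).2.1, (hpq n).2.2.trans_lt hx.2⟩
  have hratio : Tendsto (fun n => p n / w (p n)) atTop (𝓝 (x / w x)) :=
    hpx.div ((hg.hasDerivAt hx).continuousAt.tendsto.comp hpx) (hg.pos x hx).ne'
  have hgq (n : ℕ) : g (q n) ≤ p n :=
    (hg.strictMonoOn.monotoneOn (hq n) hx (hpq n).2.2).trans (hpq n).1
  exact ⟨le_of_tendsto_of_tendsto' (hratio.const_mul _) hpqx fun n =>
      hh.le_average hg (hp n) (hq n) (hpq n).2.1 (hgq n),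
    le_of_tendsto_of_tendsto' hpqx (hratio.const_mul _) fun n =>
      hh.average_le hg (hp n) (hq n) (hpq n).2.1 (hgq n)⟩

end InvariantDensity

/-- On `[p, q]` the function `h` is comparable to `t` and oscillates by at most `C`, at Lipschitz
scale `q - p`. -/
structure ControlledOn (h : ℝ → ℝ) (p q t C : ℝ) : Prop where
  nonneg : 0 ≤ C
  le_mul : ∀ x ∈ Icc p q, t ≤ C * h x
  mul_le : ∀ x ∈ Icc p q, h x ≤ C * t
  abs_sub_mul_le : ∀ x ∈ Icc p q, ∀ y ∈ Icc p q, |h x - h y| * (q - p) ≤ C * |x - y|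

namespace ControlledOn

variable {h : ℝ → ℝ} {p q t t' A C C' : ℝ}

lemma mono (hC : ControlledOn h p q t C) (hh : ∀ x ∈ Icc p q, 0 ≤ h x) (ht : 0 ≤ t)
    (hCC' : C ≤ C') : ControlledOn h p q t C' where
  nonneg := hC.nonneg.trans hCC'
  le_mul x hx := (hC.le_mul x hx).trans (mul_le_mul_of_nonneg_right hCC' (hh x hx))
  mul_le x hx := (hC.mul_le x hx).trans (mul_le_mul_of_nonneg_right hCC' ht)
  abs_sub_mul_le x hx y hy :=
    (hC.abs_sub_mul_le x hx y hy).trans (mul_le_mul_of_nonneg_right hCC' (abs_nonneg _))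

lemma rescale (hC : ControlledOn h p q t C) (ht : 0 ≤ t) (htt' : t ≤ t') (ht' : t' ≤ A * t)
    (hA : 1 ≤ A) : ControlledOn h p q t' (A * C) where
  nonneg := mul_nonneg (zero_le_one.trans hA) hC.nonneg
  le_mul x hx := ht'.trans <| by
    rw [mul_assoc]
    exact mul_le_mul_of_nonneg_left (hC.le_mul x hx) (zero_le_one.trans hA)
  mul_le x hx := (hC.mul_le x hx).trans <|
    mul_le_mul (le_mul_of_one_le_left hC.nonneg hA) htt' ht
      (mul_nonneg (zero_le_one.trans hA) hC.nonneg)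
  abs_sub_mul_le x hx y hy := (hC.abs_sub_mul_le x hx y hy).trans <|
    mul_le_mul_of_nonneg_right (le_mul_of_one_le_left hC.nonneg hA) (abs_nonneg _)

end ControlledOn

namespace InvariantDensity

variable {δ c K m M κ x x₀ y : ℝ} {w g h : ℝ → ℝ}

lemma le_mul_div_displacement (hh : InvariantDensity δ m M κ g h)
    (hg : NeutralBranch δ c K w g) (hx₀ : x₀ ∈ Ioo 0 δ) (hx : x ∈ Icc (g x₀) x₀) :
    h x ≤ M * Real.exp (2 * K / c) * (g x₀ / w (g x₀)) :=
  (hh.mem_Icc_near_zero hg ⟨(hg.mapsTo hx₀).1.trans_le hx.1, hx.2.trans_lt hx₀.2⟩).2.trans <|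
    mul_le_mul_of_nonneg_left (hg.div_displacement_mem_Icc hx₀ hx).2
      (mul_nonneg hh.M_pos.le (Real.exp_nonneg _))

lemma abs_sub_mul_displacement_le {C : ℝ} (hh : InvariantDensity δ m M κ g h)
    (hg : NeutralBranch δ c K w g) (hC : 2 * K / c * Real.exp (2 * K / c) + κ = C)
    (hx₀ : x₀ ∈ Ioo 0 δ) (hx : g x₀ ≤ x) (hxy : x < y) (hy : y ≤ x₀) :
    |h x - h y| * w (g x₀) ≤ C * Real.exp C * (M * Real.exp (2 * K / c)) * (y - x) := by
  set D := Real.exp (2 * K / c)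
  have hC0 : 0 ≤ C := by
    have := hg.c_pos
    have := hg.K_nonneg
    have := hh.κ_nonneg
    rw [← hC]
    positivity
  have hM := hh.M_pos.le
  have hp := hg.mapsTo hx₀
  have hwp := hg.pos _ hp
  have hx0 : 0 < x := hp.1.trans_le hx
  have hyδ : y < δ := hy.trans_lt hx₀.2
  have hgy : g y ≤ x := (hg.strictMonoOn.monotoneOn ⟨hx0.trans hxy, hyδ⟩ hx₀ hy).trans hx
  have hcomp {a b : ℝ} (ha : a ∈ Icc x y) (hb : b ∈ Icc x y) :
      h a ≤ Real.exp (C * ((y - x) / x)) * h b :=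
    hC ▸ hh.le_exp_mul_near_zero hg hx0 hxy hyδ hgy ha hb
  have hlen0 : 0 ≤ (y - x) / x := div_nonneg (by linarith) hx0.le
  have hlen : (y - x) / x ≤ 1 :=
    (div_le_one hx0).2 (by linarith [hg.le_self _ hp, hg.add_eq x₀ hx₀])
  have hleft := left_mem_Icc.2 hxy.le
  have hright := right_mem_Icc.2 hxy.le
  have habs := abs_sub_le_of_le_exp_mul (mul_nonneg hC0 hlen0) (mul_le_of_le_one_right hC0 hlen)
    (hh.pos x ⟨hx0, (hxy.trans hyδ).le.trans hh.δ_le_one⟩).le (hcomp hleft hright)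
    (hcomp hright hleft) (hh.le_mul_div_displacement hg hx₀ ⟨hx, hxy.le.trans hy⟩)
    (hh.le_mul_div_displacement hg hx₀ ⟨hx.trans hxy.le, hy⟩)
  calc |h x - h y| * w (g x₀)
      ≤ C * ((y - x) / x) * Real.exp C * (M * D * (g x₀ / w (g x₀))) * w (g x₀) := by gcongr
    _ = C * Real.exp C * (M * D) * (y - x) * (g x₀ / x) := by field_simp
    _ ≤ C * Real.exp C * (M * D) * (y - x) := by
        have : 0 ≤ y - x := sub_nonneg.2 hxy.le
        exact mul_le_of_le_one_right (by positivity) ((div_le_one hx0).2 hx)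

lemma exists_abs_sub_mul_le (hh : InvariantDensity δ m M κ g h)
    (hg : NeutralBranch δ c K w g) :
    ∃ L, ∀ x₀ ∈ Ioo 0 δ, ∀ x ∈ Icc (g x₀) x₀, ∀ y ∈ Icc (g x₀) x₀,
      |h x - h y| * (x₀ - g x₀) ≤ L * |x - y| := by
  refine ⟨(2 * K / c * Real.exp (2 * K / c) + κ) *
    Real.exp (2 * K / c * Real.exp (2 * K / c) + κ) * (M * Real.exp (2 * K / c)),
    fun x₀ hx₀ x hx y hy => ?_⟩
  rw [sub_eq_of_eq_add' (hg.add_eq x₀ hx₀).symm]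
  wlog hxy : x < y generalizing x y
  · rcases (not_lt.1 hxy).eq_or_lt with rfl | hyx
    · simp
    · rw [abs_sub_comm (h x), abs_sub_comm x]
      exact this y hy x hx hyx
  rw [abs_sub_comm x, abs_of_pos (sub_pos.2 hxy)]
  exact hh.abs_sub_mul_displacement_le hg rfl hx₀ hx.1 hxy hy.2

end InvariantDensity
lemma NeutralBranch.div_displacement_mem_Icc_of_mem_iterate {δ c K x x₀ : ℝ} {w g : ℝ → ℝ}
    {k : ℕ} (hg : NeutralBranch δ c K w g) (hx₀ : x₀ ∈ Ioo 0 δ)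
    (hx : x ∈ Icc (g^[k + 1] x₀) (g^[k] x₀)) :
    x / w x ∈ Icc ((k + 1) / (1 + 8 / c)) ((x₀ / w x₀ + 3) * (k + 1)) := by
  have hc := hg.c_pos
  have hx₀w : 1 ≤ x₀ / w x₀ := (one_le_div (hg.pos _ hx₀)).2 (hg.le_self _ hx₀)
  have hlower := (hg.div_displacement_iterate_mem_Icc hx₀ k).1
  have hupper := (hg.div_displacement_iterate_mem_Icc hx₀ (k + 1)).2
  rw [Function.iterate_succ_apply'] at hx hupper
  have hratio := hg.div_displacement_mem_Icc (hg.iterate_mem hx₀ k) hx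
  have : (0 : ℝ) ≤ k := k.cast_nonneg
  refine ⟨le_trans ?_ (hlower.trans hratio.1), (hratio.2.trans hupper).trans ?_⟩
  · rw [div_le_iff₀ (by positivity)]
    calc (k + 1 : ℝ) ≤ k + 1 + (8 / c + c / 8 * k) := le_add_of_nonneg_right (by positivity)
      _ = (1 + c / 8 * k) * (1 + 8 / c) := by field_simp; ring
      _ ≤ _ := by gcongr
  · push_cast
    nlinarith

lemma InvariantDensity.exists_controlledOn {δ c K m M κ x₀ : ℝ} {w g h : ℝ → ℝ}
    (hh : InvariantDensity δ m M κ g h) (hg : NeutralBranch δ c K w g) (hx₀ : x₀ ∈ Ioo 0 δ) :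
    ∃ C, ∀ k : ℕ, ControlledOn h (g^[k + 1] x₀) (g^[k] x₀) (k + 1) C := by
  obtain ⟨L, hL⟩ := hh.exists_abs_sub_mul_le hg
  set D := Real.exp (2 * K / c)
  have hD : 0 < D := Real.exp_pos _
  have hm := hh.m_pos
  have hM := hh.M_pos
  have hc := hg.c_pos
  have := hg.pos _ hx₀
  have := hx₀.1
  set Cₗ := (1 + 8 / c) * (2 * D / m)
  set Cᵤ := M * D * (x₀ / w x₀ + 3)
  have hCₗ : 0 ≤ Cₗ := by positivity
  refine ⟨max Cₗ (max Cᵤ L), fun k => ?_⟩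
  have hmem {x : ℝ} (hx : x ∈ Icc (g^[k + 1] x₀) (g^[k] x₀)) : x ∈ Ioo 0 δ :=
    ⟨(hg.iterate_mem hx₀ (k + 1)).1.trans_le hx.1, hx.2.trans_lt (hg.iterate_mem hx₀ k).2⟩
  refine ⟨hCₗ.trans (le_max_left _ _), fun x hx => ?_, fun x hx => ?_, fun x hx y hy => ?_⟩
  · have hx0 := hh.pos x ⟨(hmem hx).1, (hmem hx).2.le.trans hh.δ_le_one⟩
    calc (k + 1 : ℝ) ≤ (1 + 8 / c) * (x / w x) :=
          (div_le_iff₀' (by positivity)).1 (hg.div_displacement_mem_Icc_of_mem_iterate hx₀ hx).1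
      _ = Cₗ * (m / (2 * D) * (x / w x)) := by simp only [Cₗ]; field_simp
      _ ≤ Cₗ * h x := by
          gcongr
          exact (hh.mem_Icc_near_zero hg (hmem hx)).1
      _ ≤ _ := mul_le_mul_of_nonneg_right (le_max_left _ _) hx0.le
  · calc h x ≤ M * D * (x / w x) := (hh.mem_Icc_near_zero hg (hmem hx)).2
      _ ≤ M * D * ((x₀ / w x₀ + 3) * (k + 1)) := by
          gcongr
          exact (hg.div_displacement_mem_Icc_of_mem_iterate hx₀ hx).2
      _ = Cᵤ * (k + 1) := (mul_assoc _ _ _).symm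
      _ ≤ _ := mul_le_mul_of_nonneg_right ((le_max_left _ _).trans (le_max_right _ _))
            (by positivity)
  · rw [Function.iterate_succ_apply'] at hx hy ⊢
    exact (hL _ (hg.iterate_mem hx₀ k) x hx y hy).trans (mul_le_mul_of_nonneg_right
      ((le_max_right _ _).trans (le_max_right _ _)) (abs_nonneg _))

section Densities

variable {X : Type*} [MeasurableSpace X] {μ : Measure X} {s : Set X} {h : X → ℝ}

lemma integrable_of_isFiniteMeasure_withDensity
    [IsFiniteMeasure (μ.withDensity fun x => ENNReal.ofReal (h x))]
    (hh : AEStronglyMeasurable h μ) (hh0 : 0 ≤ᵐ[μ] h) : Integrable h μ := by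
  refine ⟨hh, (hasFiniteIntegral_iff_ofReal hh0).2 ?_⟩
  rw [← setLIntegral_univ, ← withDensity_apply _ MeasurableSet.univ]
  exact measure_lt_top _ _

lemma measureReal_withDensity_ofReal (hs : MeasurableSet s)
    (hh : AEStronglyMeasurable h (μ.restrict s)) (hh0 : 0 ≤ᵐ[μ.restrict s] h) :
    (μ.withDensity fun x => ENNReal.ofReal (h x)).real s = ∫ x in s, h x ∂μ := by
  rw [measureReal_def, withDensity_apply _ hs, integral_eq_lintegral_of_nonneg_ae hh0 hh]

end Densities

section UnitIntervalDensity

variable {h : ℝ → ℝ} {p q t : ℝ}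

lemma continuousOn_Ioc_of_lipschitzOnWith
    (hLip : ∀ ε : ℝ, 0 < ε → ∃ L : NNReal, LipschitzOnWith L h (Icc ε 1)) :
    ContinuousOn h (Ioc 0 1) := fun x hx => by
  obtain ⟨L, hL⟩ := hLip (x / 2) (half_pos hx.1)
  exact (hL.continuousOn x ⟨half_le_self hx.1.le, hx.2⟩).mono_of_mem_nhdsWithin
    (mem_nhdsWithin.2 ⟨Ioi (x / 2), isOpen_Ioi, half_lt_self hx.1,
      fun y hy => ⟨le_of_lt hy.1, hy.2.2⟩⟩)

lemma exists_pos_bounds_of_continuousOn (hpq : p ≤ q) (hh : ContinuousOn h (Icc p q))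
    (hpos : ∀ x ∈ Icc p q, 0 < h x) : ∃ m M, 0 < m ∧ ∀ x ∈ Icc p q, h x ∈ Icc m M := by
  obtain ⟨a, ha, hmin⟩ := isCompact_Icc.exists_isMinOn (nonempty_Icc.2 hpq) hh
  obtain ⟨b, -, hmax⟩ := isCompact_Icc.exists_isMaxOn (nonempty_Icc.2 hpq) hh
  exact ⟨h a, h b, hpos a ha, fun x hx => ⟨hmin hx, hmax hx⟩⟩

lemma le_exp_mul_of_lipschitzOnWith {L : NNReal} {m : ℝ} {s : Set ℝ} (hL : LipschitzOnWith L h s)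
    (hm : 0 < m) (hmh : ∀ x ∈ s, m ≤ h x) {x y : ℝ} (hx : x ∈ s) (hy : y ∈ s) :
    h x ≤ Real.exp (L / m * |x - y|) * h y := by
  have hy0 := hm.trans_le (hmh y hy)
  calc h x ≤ h y + L * |x - y| :=
        sub_le_iff_le_add'.1 ((le_abs_self _).trans (hL.dist_le_mul x hx y hy))
    _ = h y + L / m * |x - y| * m := by field_simp
    _ ≤ h y + L / m * |x - y| * h y := by
        gcongr
        exact hmh y hy
    _ = (L / m * |x - y| + 1) * h y := by ring
    _ ≤ _ := by
        gcongr
        exact Real.add_one_le_exp _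

lemma exists_controlledOn_of_lipschitzOnWith {L : NNReal} (hpq : p ≤ q)
    (hL : LipschitzOnWith L h (Icc p q)) (hpos : ∀ x ∈ Icc p q, 0 < h x) (ht : 0 < t) :
    ∃ C, ControlledOn h p q t C := by
  obtain ⟨m, M, hm, hmM⟩ := exists_pos_bounds_of_continuousOn hpq hL.continuousOn hpos
  refine ⟨max (t / m) (max (M / t) (L * (q - p))), ?_, fun x hx => ?_, fun x hx => ?_,
    fun x hx y hy => ?_⟩
  · exact (div_pos ht hm).le.trans (le_max_left _ _)
  · calc t = t / m * m := (div_mul_cancel₀ t hm.ne').symm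
      _ ≤ _ := mul_le_mul (le_max_left _ _) (hmM x hx).1 hm.le
          ((div_pos ht hm).le.trans (le_max_left _ _))
  · exact (hmM x hx).2.trans <| (div_le_iff₀ ht).1 ((le_max_left _ _).trans (le_max_right _ _))
  · calc |h x - h y| * (q - p) ≤ L * |x - y| * (q - p) :=
          mul_le_mul_of_nonneg_right (hL.dist_le_mul x hx y hy) (sub_nonneg.2 hpq)
      _ = L * (q - p) * |x - y| := by ring
      _ ≤ _ := mul_le_mul_of_nonneg_right ((le_max_right _ _).trans (le_max_right _ _))
          (abs_nonneg _)

end UnitIntervalDensity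

/-- The displacement `f x - x` of a Holland map `f` on its neutral branch. -/
noncomputable def displacement (γ : ℝ) (ρ : ℝ → ℝ) (x : ℝ) : ℝ :=
  x * (x ^ γ * ρ x)

section Displacement

variable {γ x : ℝ} {ρ : ℝ → ℝ}

lemma contDiffOn_displacement (hρ : ContDiffOn ℝ 2 ρ (Ioo 0 1)) :
    ContDiffOn ℝ 2 (displacement γ ρ) (Ioo 0 1) :=
  contDiffOn_id.mul ((contDiffOn_id.rpow_const_of_ne fun _ hx => hx.1.ne').mul hρ)

lemma hasDerivAt_displacement (hρ : ContDiffOn ℝ 2 ρ (Ioo 0 1)) (hx : x ∈ Ioo 0 1) :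
    HasDerivAt (displacement γ ρ) (x ^ γ * ((1 + γ) * ρ x + x * deriv ρ x)) x := by
  have hρx := ((hρ.contDiffAt (isOpen_Ioo.mem_nhds hx)).differentiableAt two_ne_zero).hasDerivAt
  have hpow := Real.hasDerivAt_rpow_const (p := γ) (Or.inl hx.1.ne')
  refine ((hasDerivAt_id x).mul (hpow.mul hρx)).congr_deriv ?_
  have := hx.1.ne'
  simp only [Real.rpow_sub_one this, id, Pi.mul_apply]
  field_simp
  ring

lemma hasDerivAt_deriv_displacement (hρ : ContDiffOn ℝ 2 ρ (Ioo 0 1)) (hx : x ∈ Ioo 0 1) :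
    HasDerivAt (deriv (displacement γ ρ)) (x ^ γ / x *
      ((1 + γ) * γ * ρ x + 2 * (1 + γ) * (x * deriv ρ x) + x ^ 2 * deriv (deriv ρ) x)) x := by
  have hmem := isOpen_Ioo.mem_nhds hx
  have hρx := ((hρ.contDiffAt hmem).differentiableAt two_ne_zero).hasDerivAt
  have hρ'x := (((hρ.deriv_of_isOpen (m := 1) isOpen_Ioo (by norm_num)).contDiffAt
    hmem).differentiableAt one_ne_zero).hasDerivAt
  have hpow := Real.hasDerivAt_rpow_const (p := γ) (Or.inl hx.1.ne')
  have hderiv : (fun y => y ^ γ * ((1 + γ) * ρ y + y * deriv ρ y)) =ᶠ[𝓝 x]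
      deriv (displacement γ ρ) := by
    filter_upwards [hmem] with y hy using (hasDerivAt_displacement hρ hy).deriv.symm
  refine HasDerivAt.congr_of_eventuallyEq ((hpow.mul
    ((hρx.const_mul (1 + γ)).add ((hasDerivAt_id x).mul hρ'x))).congr_deriv ?_) hderiv.symm
  have := hx.1.ne'
  simp only [Real.rpow_sub_one this, id, Pi.mul_apply, Pi.add_apply]
  field_simp
  ring

lemma mul_deriv_displacement (hρ : ContDiffOn ℝ 2 ρ (Ioo 0 1)) (hx : x ∈ Ioo 0 1)
    (hρx : ρ x ≠ 0) :
    x * deriv (displacement γ ρ) x = (1 + γ + x * deriv ρ x / ρ x) * displacement γ ρ x := by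
  rw [(hasDerivAt_displacement hρ hx).deriv, displacement]
  field_simp

lemma sq_mul_deriv_deriv_displacement (hρ : ContDiffOn ℝ 2 ρ (Ioo 0 1)) (hx : x ∈ Ioo 0 1)
    (hρx : ρ x ≠ 0) :
    x ^ 2 * deriv (deriv (displacement γ ρ)) x =
      ((1 + γ) * γ + 2 * (1 + γ) * (x * deriv ρ x / ρ x) + x ^ 2 * deriv (deriv ρ) x / ρ x) *
        displacement γ ρ x := by
  have := hx.1.ne'
  rw [(hasDerivAt_deriv_displacement hρ hx).deriv, displacement]
  field_simp

end Displacement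

namespace IsHolland

variable {γ : ℝ} {ρ f : ℝ → ℝ} {a b x ε : ℝ}

lemma displacement_pos (hf : IsHolland γ ρ f) (hx : x ∈ Ioo 0 1) : 0 < displacement γ ρ x :=
  mul_pos hx.1 (mul_pos (Real.rpow_pos_of_pos hx.1 γ) (hf.rho_pos x hx))

lemma displacement_le_self (hf : IsHolland γ ρ f) (hx : x ∈ Ioo 0 1) (hρx : ρ x ≤ 1) :
    displacement γ ρ x ≤ x :=
  mul_le_of_le_one_right hx.1.le <| mul_le_one₀
    (Real.rpow_le_one hx.1.le hx.2.le hf.gamma_pos.le) (hf.rho_pos x hx).le hρx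

lemma exists_forall_small (hf : IsHolland γ ρ f) (hε : 0 < ε) :
    ∃ δ, 0 < δ ∧ δ ≤ 1 ∧ ∀ x ∈ Ioo 0 δ, |x * deriv ρ x / ρ x| < ε ∧
      |x ^ 2 * deriv (deriv ρ) x / ρ x| < 1 ∧ ρ x ≤ 1 := by
  have hsmall := (hf.deriv_small.eventually (Metric.ball_mem_nhds 0 hε)).and
    ((hf.deriv2_small.eventually (Metric.ball_mem_nhds 0 one_pos)).and
      (hf.rho_zero.eventually (eventually_le_nhds one_pos)))
  obtain ⟨δ, hδ, hsub⟩ := (mem_nhdsGT_iff_exists_mem_Ioc_Ioo_subset one_pos).1 hsmall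
  exact ⟨δ, hδ.1, hδ.2, fun x hx => by
    simpa only [mem_ofPred_eq, dist_zero_right, Real.norm_eq_abs] using hsub hx⟩

lemma exists_neutralGerm (hf : IsHolland γ ρ f) (hγ1 : γ < 1) :
    ∃ δ, 0 < δ ∧ δ ≤ 1 ∧ NeutralGerm δ (γ / 2) 5 (displacement γ ρ) := by
  have hγ := hf.gamma_pos
  obtain ⟨δ, hδ0, hδ1, hsmall⟩ :=
    hf.exists_forall_small (lt_min (half_pos hγ) (sub_pos.2 hγ1))
  have hmem {x : ℝ} (hx : x ∈ Ioo 0 δ) : x ∈ Ioo 0 1 := ⟨hx.1, hx.2.trans_le hδ1⟩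
  refine ⟨δ, hδ0, hδ1, (contDiffOn_displacement hf.smooth).mono fun x => hmem, half_pos hγ,
    by norm_num, fun x hx => hf.displacement_pos (hmem hx),
    fun x hx => hf.displacement_le_self (hmem hx) (hsmall x hx).2.2, fun x hx => ?_,
    fun x hx => ?_, fun x hx => ?_⟩
  all_goals
    have hw := hf.displacement_pos (hmem hx)
    have hρx := (hf.rho_pos x (hmem hx)).ne'
    obtain ⟨hu, hv, -⟩ := hsmall x hx
    obtain ⟨huγ, hu1⟩ := lt_min_iff.1 hu
    rw [abs_lt] at huγ hu1 hv
  · rw [mul_deriv_displacement hf.smooth (hmem hx) hρx]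
    exact mul_le_mul_of_nonneg_right (by linarith) hw.le
  · rw [mul_deriv_displacement hf.smooth (hmem hx) hρx]
    exact mul_le_mul_of_nonneg_right (by linarith) hw.le
  · rw [← abs_of_nonneg (sq_nonneg x), ← abs_mul,
      sq_mul_deriv_deriv_displacement hf.smooth (hmem hx) hρx, abs_mul, abs_of_pos hw]
    refine mul_le_mul_of_nonneg_right (abs_le.2 ?_) hw.le
    constructor <;> nlinarith

lemma eq_add_displacement (hf : IsHolland γ ρ f) (hx : x ∈ Icc 0 (1 / 2)) :
    f x = x + displacement γ ρ x := by
  rw [hf.eq_left x hx, displacement, mul_add, mul_one]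

lemma strictMonoOn (hf : IsHolland γ ρ f) : StrictMonoOn f (Ioc 0 (1 / 2)) := by
  refine strictMonoOn_of_deriv_pos (convex_Ioc _ _) ?_ fun x hx => ?_
  · refine (continuousOn_id.add (contDiffOn_displacement hf.smooth).continuousOn |>.mono
      fun x hx => ⟨hx.1, hx.2.trans_lt one_half_lt_one⟩).congr
      fun x hx => hf.eq_add_displacement (Ioc_subset_Icc_self hx)
  · rw [interior_Ioc] at hx
    exact zero_lt_one.trans (hf.expanding x ⟨hx.1, hx.2.trans one_half_lt_one⟩ hx.2.ne)

lemma preimage_Icc_inter_Icc (hf : IsHolland γ ρ f) (ha : a ∈ Ioo 0 (1 / 2))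
    (hb : b ∈ Ioo 0 (1 / 2)) (hfa : 0 < f a) (hfb : f b ≤ 1) :
    f ⁻¹' Icc (f a) (f b) ∩ Icc 0 1 = Icc a b ∪ Icc ((1 + f a) / 2) ((1 + f b) / 2) := by
  ext x
  simp only [mem_inter_iff, mem_preimage, mem_union, mem_Icc]
  rcases le_or_gt x 0 with hx0 | hx0
  · have hnot : ¬(a ≤ x) := fun h => by linarith [ha.1]
    have hnot' : ¬((1 + f a) / 2 ≤ x) := fun h => by linarith
    refine iff_of_false (fun h => ?_) (by tauto)
    obtain rfl : x = 0 := le_antisymm hx0 h.2.1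
    have hf0 : f 0 = 0 := by rw [hf.eq_left 0 (by norm_num), zero_mul]
    linarith [h.1.1]
  rcases le_or_gt x (1 / 2) with hx | hx
  · have hmono := hf.strictMonoOn
    rw [hmono.le_iff_le (Ioo_subset_Ioc_self ha) ⟨hx0, hx⟩,
      hmono.le_iff_le ⟨hx0, hx⟩ (Ioo_subset_Ioc_self hb)]
    have hnot : ¬((1 + f a) / 2 ≤ x) := fun h => by linarith
    have hx01 : 0 ≤ x ∧ x ≤ 1 := ⟨hx0.le, by linarith⟩
    tauto
  · have hnot : ¬(x ≤ b) := fun h => by linarith [hb.2]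
    constructor
    · rintro ⟨⟨hax, hxb⟩, -, hx1⟩
      rw [hf.eq_right x ⟨hx, hx1⟩] at hax hxb
      exact Or.inr ⟨by linarith, by linarith⟩
    · rintro (h | ⟨hax, hxb⟩)
      · exact absurd h.2 hnot
      · have hx1 : x ≤ 1 := by linarith
        rw [hf.eq_right x ⟨hx, hx1⟩]
        exact ⟨⟨by linarith, by linarith⟩, hx0.le, hx1⟩

end IsHolland

section TransferEquation

variable {γ p q : ℝ} {ρ f h v : ℝ → ℝ} {ν : Measure ℝ}

lemma intervalIntegrable_of_density [IsFiniteMeasure ν]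
    (hdens : ν = (volume.restrict (Icc 0 1)).withDensity fun x => ENNReal.ofReal (h x))
    (hpos : ∀ x ∈ Ioc 0 1, 0 < h x) (hcont : ContinuousOn h (Ioc 0 1)) :
    IntervalIntegrable h volume 0 1 := by
  rw [← restrict_Ioc_eq_restrict_Icc] at hdens
  subst hdens
  exact (intervalIntegrable_iff_integrableOn_Ioc_of_le zero_le_one).2 <|
    integrable_of_isFiniteMeasure_withDensity (hcont.aestronglyMeasurable measurableSet_Ioc)
      ((ae_restrict_mem measurableSet_Ioc).mono fun x hx => (hpos x hx).le)

lemma measureReal_Icc_eq_integral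
    (hdens : ν = (volume.restrict (Icc 0 1)).withDensity fun x => ENNReal.ofReal (h x))
    (hpos : ∀ x ∈ Ioc 0 1, 0 < h x) (hcont : ContinuousOn h (Ioc 0 1))
    (hp : 0 < p) (hpq : p ≤ q) (hq : q ≤ 1) : ν.real (Icc p q) = ∫ t in p..q, h t := by
  have hsub : Icc p q ⊆ Ioc 0 1 := Icc_subset_Ioc hp hq
  have hrestrict : (volume.restrict (Icc (0 : ℝ) 1)).restrict (Icc p q) =
      volume.restrict (Icc p q) :=
    Measure.restrict_restrict_of_subset (hsub.trans Ioc_subset_Icc_self)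
  rw [hdens, measureReal_withDensity_ofReal measurableSet_Icc, hrestrict,
    intervalIntegral.integral_of_le hpq, integral_Icc_eq_integral_Ioc]
  · exact hrestrict ▸ (hcont.mono hsub).aestronglyMeasurable measurableSet_Icc
  · exact hrestrict ▸ (ae_restrict_mem measurableSet_Icc).mono fun x hx => (hpos x (hsub hx)).le

namespace IsHolland

lemma integral_eq_add_integral (hf : IsHolland γ ρ f) [IsFiniteMeasure ν]
    (hν : MeasurePreserving f ν ν)
    (hdens : ν = (volume.restrict (Icc 0 1)).withDensity fun x => ENNReal.ofReal (h x))
    (hpos : ∀ x ∈ Ioc 0 1, 0 < h x) (hcont : ContinuousOn h (Ioc 0 1))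
    (hv : ∀ x ∈ Ioo 0 1, v x ∈ Ioo 0 (1 / 2) ∧ f (v x) = x) (hp : p ∈ Ioo 0 1) (hq : q ∈ Ioo 0 1)
    (hpq : p ≤ q) :
    ∫ t in p..q, h t = (∫ t in v p..v q, h t) + ∫ t in (1 + p) / 2..(1 + q) / 2, h t := by
  obtain ⟨hvp, hfp⟩ := hv p hp
  obtain ⟨hvq, hfq⟩ := hv q hq
  have hvpq : v p ≤ v q := (hf.strictMonoOn.le_iff_le (Ioo_subset_Ioc_self hvp)
    (Ioo_subset_Ioc_self hvq)).1 (by rwa [hfp, hfq])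
  have hpre : f ⁻¹' Icc p q ∩ Icc 0 1 = Icc (v p) (v q) ∪ Icc ((1 + p) / 2) ((1 + q) / 2) := by
    have := hf.preimage_Icc_inter_Icc hvp hvq (hp.1.trans_eq hfp.symm)
      (hfq.trans_le hq.2.le)
    rwa [hfp, hfq] at this
  have hnull : ν (Icc 0 1)ᶜ = 0 := by
    rw [hdens]
    exact withDensity_absolutelyContinuous _ _ (ae_restrict_mem measurableSet_Icc)
  have hdisj : Disjoint (Icc (v p) (v q)) (Icc ((1 + p) / 2) ((1 + q) / 2)) :=
    disjoint_left.2 fun x hx hx' => by linarith [hx.2, hx'.1, hvq.2, hp.1]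
  have hν_eq : ν.real (Icc p q) =
      ν.real (Icc (v p) (v q)) + ν.real (Icc ((1 + p) / 2) ((1 + q) / 2)) := by
    rw [← measureReal_union hdisj measurableSet_Icc, ← hpre, measureReal_def, measureReal_def,
      measure_inter_conull hnull, hν.measure_preimage measurableSet_Icc.nullMeasurableSet]
  rwa [measureReal_Icc_eq_integral hdens hpos hcont hp.1 hpq hq.2.le,
    measureReal_Icc_eq_integral hdens hpos hcont hvp.1 hvpq (by linarith [hvq.2]),
    measureReal_Icc_eq_integral hdens hpos hcont (by linarith [hp.1]) (by linarith)
      (by linarith [hq.2])] at hν_eq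

lemma exists_invariantDensity (hf : IsHolland γ ρ f) [IsFiniteMeasure ν]
    (hν : MeasurePreserving f ν ν)
    (hdens : ν = (volume.restrict (Icc 0 1)).withDensity fun x => ENNReal.ofReal (h x))
    (hpos : ∀ x ∈ Ioc 0 1, 0 < h x)
    (hLip : ∀ ε : ℝ, 0 < ε → ∃ L : NNReal, LipschitzOnWith L h (Icc ε 1))
    (hv : ∀ x ∈ Ioo 0 1, v x ∈ Ioo 0 (1 / 2) ∧ f (v x) = x) :
    ∃ m M κ, ∀ δ ≤ 1, InvariantDensity δ m M κ v h := by
  have hcont := continuousOn_Ioc_of_lipschitzOnWith hLip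
  obtain ⟨L, hL⟩ := hLip (1 / 2) one_half_pos
  obtain ⟨m, M, hm, hmM⟩ := exists_pos_bounds_of_continuousOn one_half_lt_one.le hL.continuousOn
    fun x hx => hpos x ⟨one_half_pos.trans_le hx.1, hx.2⟩
  exact ⟨m, M, L / m, fun δ hδ => ⟨hδ, hm, by positivity, hcont,
    intervalIntegrable_of_density hdens hpos hcont, hpos,
    fun p hp q hq => hf.integral_eq_add_integral hν hdens hpos hcont hv
      ⟨hp.1, hp.2.trans_le hδ⟩ ⟨hq.1, hq.2.trans_le hδ⟩, hmM,
    fun x hx y hy => le_exp_mul_of_lipschitzOnWith hL hm (fun x hx => (hmM x hx).1) hx hy⟩⟩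

end IsHolland

end TransferEquation

namespace IsHolland

variable {γ δ c K x y : ℝ} {ρ f h v : ℝ → ℝ} {ν : Measure ℝ}

lemma add_displacement_of_eq (hf : IsHolland γ ρ f) (hy : y ∈ Ioo 0 (1 / 2) ∧ f y = x) :
    y + displacement γ ρ y = x :=
  (hf.eq_add_displacement (Ioo_subset_Icc_self hy.1)).symm.trans hy.2

lemma mapsTo_inverseBranch (hv : ∀ x ∈ Ioo 0 1, v x ∈ Ioo 0 (1 / 2) ∧ f (v x) = x) :
    MapsTo v (Ioo 0 1) (Ioo 0 1) := fun x hx =>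
  Ioo_subset_Ioo_right one_half_lt_one.le (hv x hx).1

lemma inverseBranch_lt_self (hf : IsHolland γ ρ f)
    (hv : ∀ x ∈ Ioo 0 1, v x ∈ Ioo 0 (1 / 2) ∧ f (v x) = x) (hx : x ∈ Ioo 0 1) : v x < x := by
  linarith [hf.add_displacement_of_eq (hv x hx), hf.displacement_pos (mapsTo_inverseBranch hv hx)]

lemma neutralBranch (hf : IsHolland γ ρ f) (hw : NeutralGerm δ c K (displacement γ ρ))
    (hδ : δ ≤ 1) (hv : ∀ x ∈ Ioo 0 1, v x ∈ Ioo 0 (1 / 2) ∧ f (v x) = x) :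
    NeutralBranch δ c K (displacement γ ρ) v where
  toNeutralGerm := hw
  mapsTo x hx :=
    have hx1 : x ∈ Ioo 0 1 := ⟨hx.1, hx.2.trans_le hδ⟩
    ⟨(hv x hx1).1.1, (hf.inverseBranch_lt_self hv hx1).trans hx.2⟩
  add_eq x hx := hf.add_displacement_of_eq (hv x ⟨hx.1, hx.2.trans_le hδ⟩)

lemma tendsto_iterate_inverseBranch (hf : IsHolland γ ρ f)
    (hv : ∀ x ∈ Ioo 0 1, v x ∈ Ioo 0 (1 / 2) ∧ f (v x) = x) (hx : x ∈ Ioo 0 1) :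
    Tendsto (fun n => v^[n] x) atTop (𝓝 0) :=
  tendsto_iterate_zero_of_rightInverse (mapsTo_inverseBranch hv)
    (continuousOn_id.add (contDiffOn_displacement hf.smooth).continuousOn)
    (fun y hy => hf.add_displacement_of_eq (hv y hy))
    (fun y hy => lt_add_of_pos_right y (hf.displacement_pos hy)) hx

lemma exists_controlledOn_eventually (hf : IsHolland γ ρ f) (hγ1 : γ < 1) [IsFiniteMeasure ν]
    (hν : MeasurePreserving f ν ν)
    (hdens : ν = (volume.restrict (Icc 0 1)).withDensity fun x => ENNReal.ofReal (h x))
    (hpos : ∀ x ∈ Ioc 0 1, 0 < h x)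
    (hLip : ∀ ε : ℝ, 0 < ε → ∃ L : NNReal, LipschitzOnWith L h (Icc ε 1))
    (hv : ∀ x ∈ Ioo 0 1, v x ∈ Ioo 0 (1 / 2) ∧ f (v x) = x) (hx : x ∈ Ioo 0 1) :
    ∃ C, ∀ᶠ n : ℕ in atTop, ControlledOn h (v^[n + 1] x) (v^[n] x) (n + 1) C := by
  obtain ⟨δ, hδ0, hδ1, hw⟩ := hf.exists_neutralGerm hγ1
  obtain ⟨m, M, κ, hh⟩ := hf.exists_invariantDensity hν hdens hpos hLip hv
  obtain ⟨N, hN⟩ := ((hf.tendsto_iterate_inverseBranch hv hx).eventually (gt_mem_nhds hδ0)).exists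
  have hN0 : 0 < v^[N] x := ((mapsTo_inverseBranch hv).iterate N hx).1
  obtain ⟨C, hC⟩ := (hh δ hδ1).exists_controlledOn (hf.neutralBranch hw hδ1 hv) ⟨hN0, hN⟩
  refine ⟨(N + 1) * C, eventually_atTop.2 ⟨N, fun n hn => ?_⟩⟩
  obtain ⟨k, rfl⟩ := Nat.exists_eq_add_of_le' hn
  have hk := hC k
  rw [← Function.iterate_add_apply, ← Function.iterate_add_apply, add_right_comm] at hk
  refine hk.rescale (by positivity) ?_ ?_ ?_ <;> push_cast <;>
    nlinarith [mul_nonneg N.cast_nonneg k.cast_nonneg (α := ℝ), N.cast_nonneg (α := ℝ)]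

lemma exists_controlledOn (hf : IsHolland γ ρ f) (hγ1 : γ < 1) [IsFiniteMeasure ν]
    (hν : MeasurePreserving f ν ν)
    (hdens : ν = (volume.restrict (Icc 0 1)).withDensity fun x => ENNReal.ofReal (h x))
    (hpos : ∀ x ∈ Ioc 0 1, 0 < h x)
    (hLip : ∀ ε : ℝ, 0 < ε → ∃ L : NNReal, LipschitzOnWith L h (Icc ε 1))
    (hv : ∀ x ∈ Ioo 0 1, v x ∈ Ioo 0 (1 / 2) ∧ f (v x) = x) (hx : x ∈ Ioo 0 1) :
    ∃ C, ∀ n : ℕ, ControlledOn h (v^[n + 1] x) (v^[n] x) (n + 1) C := by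
  have hmem (n : ℕ) := (mapsTo_inverseBranch hv).iterate n hx
  have hsub (n : ℕ) : Icc (v^[n + 1] x) (v^[n] x) ⊆ Icc (v^[n + 1] x) 1 :=
    Icc_subset_Icc_right (hmem n).2.le
  have hpos' (n : ℕ) : ∀ y ∈ Icc (v^[n + 1] x) (v^[n] x), 0 < h y := fun y hy =>
    hpos y ⟨(hmem (n + 1)).1.trans_le hy.1, hy.2.trans (hmem n).2.le⟩
  refine exists_forall_nat_of_eventually
    (fun n C C' hCC' hC => hC.mono (fun y hy => (hpos' n y hy).le) (by positivity) hCC')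
    (fun n => ?_) (hf.exists_controlledOn_eventually hγ1 hν hdens hpos hLip hv hx)
  obtain ⟨L, hL⟩ := hLip _ (hmem (n + 1)).1
  have hle : v^[n + 1] x ≤ v^[n] x := by
    rw [Function.iterate_succ_apply']; exact (hf.inverseBranch_lt_self hv (hmem n)).le
  exact exists_controlledOn_of_lipschitzOnWith hle (hL.mono (hsub n)) (hpos' n) (by positivity)

end IsHolland

namespace ControlledOn

variable {h : ℝ → ℝ} {p q t C x : ℝ}

lemma pos (hC : ControlledOn h p q t C) (ht : 0 < t) (hx : x ∈ Icc p q) : 0 < h x :=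
  pos_of_mul_pos_right (ht.trans_le (hC.le_mul x hx)) hC.nonneg

lemma const_pos (hC : ControlledOn h p q t C) (ht : 0 < t) (hpq : p ≤ q) : 0 < C :=
  pos_of_mul_pos_left (ht.trans_le (hC.le_mul p (left_mem_Icc.2 hpq)))
    (hC.pos ht (left_mem_Icc.2 hpq)).le

lemma inv_le (hC : ControlledOn h p q t C) (ht : 0 < t) (hx : x ∈ Icc p q) : (h x)⁻¹ ≤ C / t := by
  rw [inv_le_iff_one_le_mul₀ (hC.pos ht hx), div_mul_eq_mul_div, one_le_div ht]
  exact hC.le_mul x hx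

lemma eVariationOn_inv_le (hC : ControlledOn h p q t C) (ht : 0 < t) :
    eVariationOn (fun x => (h x)⁻¹) (Icc p q) ≤ ENNReal.ofReal (C ^ 3 / t ^ 2) := by
  have hC0 := hC.nonneg
  refine eVariationOn_Icc_le_of_abs_sub_mul_le (by positivity) fun x hx y hy => ?_
  have hhx := hC.pos ht hx
  have hhy := hC.pos ht hy
  have hpq : 0 ≤ q - p := sub_nonneg.2 (hx.1.trans hx.2)
  calc |(h x)⁻¹ - (h y)⁻¹| * (q - p) = (h x)⁻¹ * (h y)⁻¹ * (|h x - h y| * (q - p)) := by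
        rw [inv_sub_inv hhx.ne' hhy.ne', abs_div, abs_of_pos (mul_pos hhx hhy), abs_sub_comm]
        field_simp
    _ ≤ C / t * (C / t) * (C * |x - y|) := by
        gcongr ?_ * ?_ * ?_
        · exact hC.inv_le ht hx
        · exact hC.inv_le ht hy
        · exact hC.abs_sub_mul_le x hx y hy
    _ = C ^ 3 / t ^ 2 * |x - y| := by ring

end ControlledOn

section DensityVariation

variable {h : ℝ → ℝ} {z : ℕ → ℝ} {C : ℝ} {i j : ℕ}

lemma eVariationOn_indicator_le_of_controlledOn (hz : AntitoneOn z (Ici 1))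
    (hC : ∀ n ≥ 1, ControlledOn h (z (n + 1)) (z n) n C) (hi : 1 ≤ i) (hij : i ≤ j) :
    eVariationOn (indicator (Icc (z j) (z i)) h) univ ≤ ENNReal.ofReal (2 * C * j) := by
  have hend {n : ℕ} (hn : 1 ≤ n) : h (z n) ∈ Icc 0 (C * n) := by
    have hmem : z n ∈ Icc (z (n + 1)) (z n) :=
      right_mem_Icc.2 (hz hn (hn.trans n.le_succ) n.le_succ)
    exact ⟨((hC n hn).pos (by positivity) hmem).le, (hC n hn).mul_le _ hmem⟩
  have hC0 := (hC i hi).nonneg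
  refine (eVariationOn_indicator_Icc_le_of_antitoneOn hC0 (hz.mono (Ici_subset_Ici.2 hi))
    (fun n hn => eVariationOn_Icc_le_of_abs_sub_mul_le hC0 (hC n (hi.trans hn)).abs_sub_mul_le)
    hij (hend hi) (hend (hi.trans hij))).trans_eq ?_
  ring_nf

lemma eVariationOn_indicator_inv_le_of_controlledOn (hz : AntitoneOn z (Ici 1))
    (hC : ∀ n ≥ 1, ControlledOn h (z (n + 1)) (z n) n C) (hi : 1 ≤ i) (hij : i ≤ j) :
    eVariationOn (indicator (Icc (z j) (z i)) fun x => (h x)⁻¹) univ ≤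
      ENNReal.ofReal ((2 * C + C ^ 3) * j / i ^ 2) := by
  have hC0 := (hC i hi).nonneg
  have hi0 : (0 : ℝ) < i := Nat.cast_pos.2 hi
  have hle {n : ℕ} (hn : i ≤ n) : (i : ℝ) ≤ n := Nat.cast_le.2 hn
  have hend {n : ℕ} (hn : i ≤ n) : (h (z n))⁻¹ ∈ Icc 0 (C / i) := by
    have hn1 := hi.trans hn
    have hn0 := hi0.trans_le (hle hn)
    have hmem : z n ∈ Icc (z (n + 1)) (z n) :=
      right_mem_Icc.2 (hz hn1 (hn1.trans n.le_succ) n.le_succ)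
    exact ⟨inv_nonneg.2 ((hC n hn1).pos hn0 hmem).le,
      ((hC n hn1).inv_le hn0 hmem).trans (div_le_div_of_nonneg_left hC0 hi0 (hle hn))⟩
  have hpiece : ∀ n ≥ i, eVariationOn (fun x => (h x)⁻¹) (Icc (z (n + 1)) (z n)) ≤
      ENNReal.ofReal (C ^ 3 / i ^ 2) := fun n hn => by
    have hin := hle hn
    refine ((hC n (hi.trans hn)).eVariationOn_inv_le (hi0.trans_le hin)).trans ?_
    gcongr
  refine (eVariationOn_indicator_Icc_le_of_antitoneOn (by positivity)
    (hz.mono (Ici_subset_Ici.2 hi)) hpiece hij (hend le_rfl) (hend hij)).trans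
      (ENNReal.ofReal_le_ofReal ?_)
  calc C / i + C / i + C ^ 3 / i ^ 2 * (j - i)
      = (2 * C * i + C ^ 3 * (j - i)) / i ^ 2 := by field_simp; ring
    _ ≤ (2 * C * j + C ^ 3 * j) / i ^ 2 := by
        have := hle hij
        gcongr
        exact sub_le_self _ hi0.le
    _ = (2 * C + C ^ 3) * j / i ^ 2 := by ring

end DensityVariation

theorem statement10
    (γ : ℝ) (ρ : ℝ → ℝ) (f : ℝ → ℝ) (hγ0 : 0 < γ) (hγ1 : γ < 1)
    (hf : IsHolland γ ρ f)
    (ν : Measure ℝ) [IsProbabilityMeasure ν]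
    (hν_inv : MeasurePreserving f ν ν)
    (h : ℝ → ℝ)
    (hdens : ν = (MeasureTheory.volume.restrict (Set.Icc (0:ℝ) 1)).withDensity
      (fun x => ENNReal.ofReal (h x)))
    (hpos : ∀ x ∈ Set.Ioc (0:ℝ) 1, 0 < h x)
    (hLip : ∀ ε : ℝ, 0 < ε → ∃ L : NNReal, LipschitzOnWith L h (Set.Icc ε 1))
    (v0 v1 : ℝ → ℝ)
    (hv0 : ∀ x ∈ Set.Ioo (0:ℝ) 1, v0 x ∈ Set.Ioo (0:ℝ) (1/2) ∧ f (v0 x) = x)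
    (hv1 : ∀ x ∈ Set.Ioo (0:ℝ) 1, v1 x ∈ Set.Ioo (1/2:ℝ) 1 ∧ f (v1 x) = x)
    (z : ℕ → ℝ) (hz0 : z 0 = 1) (hz1 : z 1 = 1/2)
    (hzrec : ∀ n : ℕ, 1 ≤ n → z (n + 1) = v0 (z n)) :
    ∃ C : ℝ, 0 < C ∧ ∀ i j : ℕ, 1 ≤ i → i < j →
      eVariationOn (Set.indicator (Set.Icc (z j) (z i)) h) Set.univ
          ≤ ENNReal.ofReal (C * j) ∧
      eVariationOn (Set.indicator (Set.Icc (z j) (z i)) (fun x => (h x)⁻¹)) Set.univ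
          ≤ ENNReal.ofReal (C * j / (i : ℝ) ^ 2) := by
  have hhalf : (1 / 2 : ℝ) ∈ Ioo 0 1 := by norm_num
  obtain ⟨C, hC⟩ := hf.exists_controlledOn hγ1 hν_inv hdens hpos hLip hv0 hhalf
  have hz (n : ℕ) : z (n + 1) = v0^[n] (1 / 2) := by
    induction n with
    | zero => exact hz1
    | succ n ih => rw [hzrec _ n.succ_pos, ih, Function.iterate_succ_apply']
  have hzC : ∀ n ≥ 1, ControlledOn h (z (n + 1)) (z n) n C := fun n hn => by
    obtain ⟨k, rfl⟩ := Nat.exists_eq_add_of_le' hn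
    simpa only [hz, Nat.cast_add, Nat.cast_one] using hC k
  have hzmem (n : ℕ) : z (n + 1) ∈ Ioo 0 1 :=
    hz n ▸ (IsHolland.mapsTo_inverseBranch hv0).iterate n hhalf
  have hanti : AntitoneOn z (Ici 1) := antitoneOn_nat_Ici_of_succ_le fun n hn => by
    obtain ⟨k, rfl⟩ := Nat.exists_eq_add_of_le' hn
    exact hzrec _ hn ▸ (hf.inverseBranch_lt_self hv0 (hzmem k)).le
  have hC0 : 0 < C := (hzC 1 le_rfl).const_pos (by simp)
    (hanti (mem_Ici.2 le_rfl) (mem_Ici.2 one_le_two) one_le_two)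
  refine ⟨2 * C + C ^ 3, by positivity, fun i j hi hij =>
    ⟨(eVariationOn_indicator_le_of_controlledOn hanti hzC hi hij.le).trans ?_,
      eVariationOn_indicator_inv_le_of_controlledOn hanti hzC hi hij.le⟩⟩
  gcongr
  exact le_add_of_nonneg_right (by positivity)
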